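/- arXiv:1905.06101 — 8 statements merged into one kernel-verified Lean document; each statement's English description precedes it below -/
import Mathlib

section
/- Let d ≥ 1, let h be a d×d complex Hermitian matrix with eigenvalues h_1 ≥ … ≥ h_d, and let p_1 ≥ … ≥ p_d ≥ 0 be real numbers. Then for every orthonormal basis (ξ_1, …, ξ_d) of ℂ^d one has 2 ∑_{i=1}^d ∑_{j=1}^d p_{i,j} |⟨ξ_i, h ξ_j⟩|² ≤ (1/2) ∑_{k=1}^d p_{k,d-k+1} (h_k − h_{d-k+1})². (Upper-bound part of Theorem 1: the quantum Fisher information over all unitary state preparations is bounded by the stated expression.) -/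
/-- The coefficients `p_{i,j}`: `0` if `p i = p j = 0`, else `(p i - p j)² / (p i + p j)`. -/
noncomputable def pij {d : ℕ} (p : Fin d → ℝ) (i j : Fin d) : ℝ :=
  if p i = 0 ∧ p j = 0 then 0 else (p i - p j) ^ 2 / (p i + p j)

/-!
The weights `p_{i,j}` form a symmetric Monge array with zero diagonal: up to a sum of univariate
terms, `p_{i,j}` is `-4 p_i p_j / (p_i + p_j)`, and `(x, y) ↦ x y / (x + y)` is supermodular.
Summation by parts in both indices writes `∑ p_{i,j} A_{i,j}`, for symmetric `A`, as a nonnegative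
combination of the corner sums of `A` over the rectangles `i ≤ k ≤ n < j`. Hence it suffices to
compare, on every such rectangle, the numbers `4 |⟨ξ_i, h ξ_j⟩|²` with the array that is
`(h_i - h_j)²` on the antidiagonal and `0` elsewhere.

The corner sum is `4 tr (P h Q h)` for the orthogonal projections `P`, `Q` onto the spans of the
`ξ_i` and of the `ξ_j`. Let `K = P h Q + Q h P`, with ordered eigenvalues `κ`. Then
`2 tr (P h Q h) = tr (h K) = tr K²`, and `tr (h K) ≤ ∑ h_i κ_i`. The reflection through the range
of `P` conjugates `K` to `-K`, so `κ` is antisymmetric under order reversal, and at most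
`min (rank P) (rank Q)` of its entries are positive; AM–GM applied to each of these finishes the
proof.
-/

open Finset Matrix
open scoped InnerProductSpace

section DoublyStochastic

variable {n R : Type*} [Fintype n] [DecidableEq n] [Field R] [LinearOrder R]
  [IsStrictOrderedRing R] {M : Matrix n n R} {f g : n → R}

/-- Birkhoff's theorem reduces the claim to permutation matrices, where it is the rearrangement
inequality. -/
theorem dotProduct_mulVec_le_dotProduct_of_mem_doublyStochastic
    (hM : M ∈ doublyStochastic R n) (hfg : Monovary f g) : f ⬝ᵥ M *ᵥ g ≤ f ⬝ᵥ g := by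
  obtain ⟨c, hc0, hc1, rfl⟩ := exists_eq_sum_perm_of_mem_doublyStochastic hM
  calc f ⬝ᵥ (∑ σ, c σ • σ.permMatrix R) *ᵥ g
      = ∑ σ, c σ * ∑ i, f i * g (σ i) := by
        simp only [sum_mulVec, dotProduct_sum, smul_mulVec, dotProduct_smul, permMatrix_mulVec,
          smul_eq_mul]
        rfl
    _ ≤ ∑ σ, c σ * ∑ i, f i * g i := by
        gcongr ∑ σ, c σ * ?_ with σ
        · exact hc0 σ
        · exact hfg.sum_mul_comp_perm_le_sum_mul
    _ = f ⬝ᵥ g := by rw [← sum_mul, hc1, one_mul, dotProduct]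

end DoublyStochastic

section Diagonalized

variable {𝕜 E ι κ : Type*} [RCLike 𝕜] [NormedAddCommGroup E] [InnerProductSpace 𝕜 E]
  [Fintype ι]

theorem norm_inner_sq_mem_doublyStochastic [DecidableEq ι] (b c : OrthonormalBasis ι 𝕜 E) :
    Matrix.of (fun i j ↦ ‖⟪b i, c j⟫_𝕜‖ ^ 2) ∈ doublyStochastic ℝ ι := by
  simp [mem_doublyStochastic_iff_sum, b.sum_sq_norm_inner_right, c.sum_sq_norm_inner_left]

/-- `T` is diagonal in the orthonormal basis `b`, with real eigenvalues `a`. Keeping the eigenvalues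
as a family makes their order and multiplicities explicit. -/
def IsDiagonalizedBy (T : E →ₗ[𝕜] E) (b : OrthonormalBasis ι 𝕜 E) (a : ι → ℝ) : Prop :=
  ∀ i, T (b i) = (a i : 𝕜) • b i

namespace IsDiagonalizedBy

variable {T K : E →ₗ[𝕜] E} {b c : OrthonormalBasis ι 𝕜 E} {a a' : ι → ℝ}

theorem inner_apply (hT : IsDiagonalizedBy T b a) (i : ι) (x : E) :
    ⟪b i, T x⟫_𝕜 = a i * ⟪b i, x⟫_𝕜 := by
  classical
  conv_lhs => rw [← b.sum_repr' x]
  simp only [map_sum, map_smul, hT _, inner_sum, inner_smul_right,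
    b.inner_eq_ite, mul_ite, mul_one, mul_zero, sum_ite_eq, mem_univ, if_true]
  ring

theorem isSymmetric (hT : IsDiagonalizedBy T b a) : T.IsSymmetric := fun x y ↦ by
  rw [← b.sum_inner_mul_inner, ← b.sum_inner_mul_inner]
  refine sum_congr rfl fun i _ ↦ ?_
  rw [hT.inner_apply, ← inner_conj_symm (T x), hT.inner_apply, map_mul, RCLike.conj_ofReal,
    inner_conj_symm]
  ring

theorem re_trace_comp (hT : IsDiagonalizedBy T b a) (hK : IsDiagonalizedBy K c a') :
    RCLike.re ((T ∘ₗ K).trace 𝕜 E) = ∑ i, ∑ j, a i * ‖⟪b i, c j⟫_𝕜‖ ^ 2 * a' j := by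
  rw [LinearMap.trace_eq_sum_inner _ c, sum_comm, map_sum]
  refine sum_congr rfl fun j _ ↦ ?_
  rw [← b.sum_inner_mul_inner, map_sum]
  refine sum_congr rfl fun i _ ↦ ?_
  rw [LinearMap.comp_apply, hT.inner_apply, hK, inner_smul_right, ← inner_conj_symm (c j),
    show (starRingEnd 𝕜) ⟪b i, c j⟫_𝕜 * (a i * (a' j * ⟪b i, c j⟫_𝕜))
      = (a i : 𝕜) * (⟪b i, c j⟫_𝕜 * (starRingEnd 𝕜) ⟪b i, c j⟫_𝕜) * a' j by ring, RCLike.mul_conj]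
  norm_cast

theorem re_trace_comp_self (hT : IsDiagonalizedBy T b a) :
    RCLike.re ((T ∘ₗ T).trace 𝕜 E) = ∑ i, a i ^ 2 := by
  rw [LinearMap.trace_eq_sum_inner _ b, map_sum]
  refine sum_congr rfl fun i _ ↦ ?_
  rw [LinearMap.comp_apply, hT.inner_apply, hT, inner_smul_right, inner_self_eq_norm_sq_to_K,
    b.norm_eq_one]
  norm_cast
  ring

theorem re_trace_comp_le (hT : IsDiagonalizedBy T b a) (hK : IsDiagonalizedBy K c a')
    (haa' : Monovary a a') : RCLike.re ((T ∘ₗ K).trace 𝕜 E) ≤ ∑ i, a i * a' i := by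
  classical
  rw [hT.re_trace_comp hK]
  simpa only [dotProduct, mulVec, of_apply, mul_sum, mul_assoc] using
    dotProduct_mulVec_le_dotProduct_of_mem_doublyStochastic
      (norm_inner_sq_mem_doublyStochastic b c) haa'

/-- Since `∑ a i ^ 2 = tr T² = ∑ a' i ^ 2`, the trace inequality `tr (T T) ≤ ∑ a i * a' i` says that
`∑ (a i - a' i) ^ 2 ≤ 0`. -/
theorem eigenvalues_unique (hb : IsDiagonalizedBy T b a) (hc : IsDiagonalizedBy T c a')
    (haa' : Monovary a a') : a = a' := by
  have hsum : ∑ i, (a i - a' i) ^ 2 ≤ 0 := by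
    have hle := hb.re_trace_comp_le hc haa'
    simp only [sub_sq, sum_add_distrib, sum_sub_distrib, mul_assoc, ← mul_sum]
    linarith [hb.re_trace_comp_self, hc.re_trace_comp_self]
  have hzero := (sum_eq_zero_iff_of_nonneg fun i _ ↦ sq_nonneg (a i - a' i)).1
    (hsum.antisymm <| sum_nonneg fun i _ ↦ sq_nonneg _)
  exact funext fun i ↦ sub_eq_zero.1 <| pow_eq_zero_iff two_ne_zero |>.1 <| hzero i (mem_univ i)

/-- `R` maps eigenvectors to eigenvectors for the opposite eigenvalue, so `-a` in reverse order is
another sorted list of the eigenvalues of `T`. -/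
theorem apply_rev_eq_neg {d : ℕ} {b : OrthonormalBasis (Fin d) 𝕜 E} {a : Fin d → ℝ}
    (hT : IsDiagonalizedBy T b a) (ha : Antitone a) (R : E ≃ₗᵢ[𝕜] E)
    (hR : ∀ x, T (R x) = -R (T x)) (i : Fin d) : a i.rev = -a i := by
  have hneg : IsDiagonalizedBy T ((b.map R).reindex Fin.revPerm) fun i ↦ -a i.rev :=
    fun i ↦ by simp [hR, hT _]
  have hanti : Antitone fun i : Fin d ↦ -a i.rev :=
    fun i j hij ↦ neg_le_neg (ha (Fin.rev_le_rev.2 hij))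
  have := congrFun (hT.eigenvalues_unique hneg (ha.monovary hanti)) i
  linarith

theorem card_filter_pos_le_finrank {F : Type*} [AddCommGroup F] [Module 𝕜 F] [FiniteDimensional 𝕜 F]
    (hT : IsDiagonalizedBy T b a) (L : E →ₗ[𝕜] F)
    (hL : ∀ x, L x = 0 → RCLike.re ⟪x, T x⟫_𝕜 ≤ 0) :
    #{i | 0 < a i} ≤ Module.finrank 𝕜 F := by
  suffices LinearIndependent 𝕜 fun i : {i // 0 < a i} ↦ L (b i) by
    simpa [Fintype.card_subtype] using this.fintype_card_le_finrank
  refine Fintype.linearIndependent_iff.2 fun g hg ↦ ?_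
  set x := ∑ i : {i // 0 < a i}, g i • b i with hx
  have hLx : L x = 0 := by simpa [hx] using hg
  have hTx : RCLike.re ⟪x, T x⟫_𝕜 = ∑ i : {i // 0 < a i}, a i * ‖g i‖ ^ 2 := by
    have hbon : Orthonormal 𝕜 fun i : {i // 0 < a i} ↦ b i :=
      b.orthonormal.comp _ Subtype.val_injective
    have hTx' : T x = ∑ i : {i // 0 < a i}, (g i * (a i : 𝕜)) • b i := by
      simp [hx, hT _, smul_smul]
    rw [hTx', hx, hbon.inner_sum, map_sum]
    refine sum_congr rfl fun i _ ↦ ?_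
    rw [← mul_assoc, RCLike.conj_mul]
    norm_cast
    ring
  have hterm : ∀ i : {i // 0 < a i}, 0 ≤ a i * ‖g i‖ ^ 2 := fun i ↦
    mul_nonneg i.2.le (sq_nonneg _)
  have hzero := (sum_eq_zero_iff_of_nonneg fun i _ ↦ hterm i).1
    ((hTx ▸ hL x hLx).antisymm <| sum_nonneg fun i _ ↦ hterm i)
  intro i
  simpa [i.2.ne'] using hzero i (mem_univ i)

end IsDiagonalizedBy

theorem exists_isDiagonalizedBy_antitone [FiniteDimensional 𝕜 E] {T : E →ₗ[𝕜] E}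
    (hT : T.IsSymmetric) {d : ℕ} (hd : Module.finrank 𝕜 E = d) :
    ∃ (b : OrthonormalBasis (Fin d) 𝕜 E) (a : Fin d → ℝ), Antitone a ∧ IsDiagonalizedBy T b a :=
  ⟨hT.eigenvectorBasis hd, hT.eigenvalues hd, hT.eigenvalues_antitone hd,
    hT.apply_eigenvectorBasis hd⟩

end Diagonalized

theorem lt_card_filter_pos_of_antitone {d : ℕ} {a : Fin d → ℝ} (ha : Antitone a) {i : Fin d}
    (hi : 0 < a i) : (i : ℕ) < #{j | 0 < a j} := by
  calc (i : ℕ) < #(Iic i) := by simp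
    _ ≤ #{j | 0 < a j} := card_le_card fun j hj ↦ by
      simpa using hi.trans_le (ha (mem_Iic.1 hj))

theorem sum_mul_le_of_comp_perm_eq_neg {ι : Type*} [Fintype ι] {a κ : ι → ℝ} (σ : Equiv.Perm ι)
    (hσ : ∀ i, κ (σ i) = -κ i) {s : Finset ι} (hs : ∀ i, 0 < κ i → i ∈ s) :
    ∑ i, a i * κ i ≤ (1 / 2) * ∑ i, κ i ^ 2 + (1 / 4) * ∑ i ∈ s, (a i - a (σ i)) ^ 2 := by
  have hneg (i) : (κ (σ i))⁻ = (κ i)⁺ := by rw [hσ, negPart_neg]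
  have hsupp (i) (hi : i ∉ s) : (κ i)⁺ = 0 := posPart_eq_zero.2 <| not_lt.1 <| mt (hs i) hi
  have hsum : ∑ i, a i * κ i = ∑ i, (a i - a (σ i)) * (κ i)⁺ := by
    calc ∑ i, a i * κ i = ∑ i, a i * (κ i)⁺ - ∑ i, a i * (κ i)⁻ := by
          simp only [← sum_sub_distrib, ← mul_sub, posPart_sub_negPart]
      _ = ∑ i, a i * (κ i)⁺ - ∑ i, a (σ i) * (κ i)⁺ := by
          rw [← Equiv.sum_comp σ fun i ↦ a i * (κ i)⁻]
          simp only [hneg]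
      _ = ∑ i, (a i - a (σ i)) * (κ i)⁺ := by simp only [← sum_sub_distrib, ← sub_mul]
  have hsq : ∑ i, κ i ^ 2 = 2 * ∑ i, (κ i)⁺ ^ 2 := by
    calc ∑ i, κ i ^ 2 = ∑ i, (κ i)⁺ ^ 2 + ∑ i, (κ i)⁻ ^ 2 := by
          rw [← sum_add_distrib]
          refine sum_congr rfl fun i _ ↦ ?_
          rcases le_total 0 (κ i) with h | h <;> simp [h]
      _ = 2 * ∑ i, (κ i)⁺ ^ 2 := by
          rw [← Equiv.sum_comp σ fun i ↦ (κ i)⁻ ^ 2]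
          simp only [hneg, two_mul]
  calc ∑ i, a i * κ i = ∑ i ∈ s, (a i - a (σ i)) * (κ i)⁺ := by
        rw [hsum]
        exact (sum_subset (subset_univ s) fun i _ hi ↦ by rw [hsupp i hi, mul_zero]).symm
    _ ≤ ∑ i ∈ s, ((κ i)⁺ ^ 2 + (1 / 4) * (a i - a (σ i)) ^ 2) := by
        gcongr with i
        linarith [sq_nonneg ((κ i)⁺ - (a i - a (σ i)) / 2)]
    _ ≤ (1 / 2) * ∑ i, κ i ^ 2 + (1 / 4) * ∑ i ∈ s, (a i - a (σ i)) ^ 2 := by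
        rw [sum_add_distrib, ← mul_sum, hsq, ← mul_assoc, one_div_mul_cancel two_ne_zero, one_mul]
        gcongr
        exact subset_univ s

section SpanImage

variable {𝕜 E ι : Type*} [RCLike 𝕜] [NormedAddCommGroup E] [InnerProductSpace 𝕜 E]

theorem starProjection_span_image_apply {v : ι → E} (hv : Orthonormal 𝕜 v) (s : Finset ι)
    [(Submodule.span 𝕜 (v '' s)).HasOrthogonalProjection] (x : E) :
    (Submodule.span 𝕜 (v '' s)).starProjection x = ∑ i ∈ s, ⟪v i, x⟫_𝕜 • v i := by
  refine Submodule.eq_starProjection_of_mem_of_inner_eq_zero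
    (sum_mem fun i hi ↦ Submodule.smul_mem _ _ <| Submodule.subset_span ⟨i, hi, rfl⟩) fun y hy ↦ ?_
  induction hy using Submodule.span_induction with
  | mem y hy =>
    obtain ⟨i, hi, rfl⟩ := hy
    rw [inner_sub_left, hv.inner_left_sum _ hi, inner_conj_symm, sub_self]
  | zero => exact inner_zero_right _
  | add y z _ _ hy hz => rw [inner_add_right, hy, hz, add_zero]
  | smul c y _ hy => rw [inner_smul_right, hy, mul_zero]

theorem finrank_span_image {v : ι → E} (hv : LinearIndependent 𝕜 v) (s : Finset ι) :
    Module.finrank 𝕜 (Submodule.span 𝕜 (v '' s)) = #s := by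
  have hvs : LinearIndependent 𝕜 fun i : s ↦ v i := hv.comp _ Subtype.val_injective
  rw [Set.image_eq_range]
  simpa using finrank_span_eq_card hvs

theorem isOrtho_span_image {v : ι → E} (hv : Orthonormal 𝕜 v) {s t : Set ι} (hst : Disjoint s t) :
    Submodule.span 𝕜 (v '' s) ⟂ Submodule.span 𝕜 (v '' t) := by
  refine Submodule.isOrtho_span.2 ?_
  rintro _ ⟨i, hi, rfl⟩ _ ⟨j, hj, rfl⟩
  exact hv.inner_eq_zero (hst.ne_of_mem hi hj)

variable [Fintype ι] [FiniteDimensional 𝕜 E]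

theorem trace_starProjection_span_image_mul (b : OrthonormalBasis ι 𝕜 E) (s : Finset ι)
    (A : E →ₗ[𝕜] E) :
    ((Submodule.span 𝕜 (b '' s)).starProjection * A : E →ₗ[𝕜] E).trace 𝕜 E
      = ∑ i ∈ s, ⟪b i, A (b i)⟫_𝕜 := by
  classical
  rw [LinearMap.trace_mul_comm, LinearMap.trace_eq_sum_inner _ b]
  simp [starProjection_span_image_apply b.orthonormal, b.inner_eq_ite, apply_ite]

theorem re_trace_mul_starProjection_span_image {T : E →ₗ[𝕜] E} (hT : T.IsSymmetric)
    (b : OrthonormalBasis ι 𝕜 E) (s t : Finset ι) :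
    RCLike.re (((Submodule.span 𝕜 (b '' s)).starProjection * T
        * (Submodule.span 𝕜 (b '' t)).starProjection * T : E →ₗ[𝕜] E).trace 𝕜 E)
      = ∑ i ∈ s, ∑ j ∈ t, ‖⟪b i, T (b j)⟫_𝕜‖ ^ 2 := by
  rw [mul_assoc, mul_assoc, trace_starProjection_span_image_mul, map_sum]
  refine sum_congr rfl fun i _ ↦ ?_
  rw [Module.End.mul_apply, Module.End.mul_apply, ContinuousLinearMap.coe_coe,
    starProjection_span_image_apply b.orthonormal, map_sum, inner_sum, map_sum]
  refine sum_congr rfl fun j _ ↦ ?_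
  rw [map_smul, inner_smul_right, ← hT, ← inner_conj_symm (T (b j)), RCLike.conj_mul]
  norm_cast

end SpanImage

section CrossPart

variable {𝕜 E : Type*} [RCLike 𝕜] [NormedAddCommGroup E] [InnerProductSpace 𝕜 E]

/-- The compression of `T` to its off-diagonal blocks `U → W` and `W → U`, that is `P T Q + Q T P`
for the orthogonal projections `P`, `Q` onto `U`, `W`. -/
noncomputable def crossPart (U W : Submodule 𝕜 E) [U.HasOrthogonalProjection]
    [W.HasOrthogonalProjection] (T : E →ₗ[𝕜] E) : E →ₗ[𝕜] E :=
  U.starProjection * T * W.starProjection + W.starProjection * T * U.starProjection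

variable {U W : Submodule 𝕜 E} [U.HasOrthogonalProjection] [W.HasOrthogonalProjection]
  {T : E →ₗ[𝕜] E}

theorem crossPart_apply (x : E) : crossPart U W T x =
    U.starProjection (T (W.starProjection x)) + W.starProjection (T (U.starProjection x)) := rfl

theorem crossPart_comm : crossPart U W T = crossPart W U T := add_comm _ _

theorem isSymmetric_crossPart (hT : T.IsSymmetric) : (crossPart U W T).IsSymmetric := fun x y ↦ by
  simp only [crossPart_apply, inner_add_left, inner_add_right,
    Submodule.inner_starProjection_left_eq_right, hT _ _]
  rw [add_comm]

theorem inner_crossPart_self_of_mem_orthogonal {x : E} (hx : x ∈ Uᗮ) :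
    ⟪x, crossPart U W T x⟫_𝕜 = 0 := by
  rw [← Submodule.starProjection_apply_eq_zero_iff] at hx
  simp [crossPart_apply, ← Submodule.inner_starProjection_left_eq_right, hx]

theorem starProjection_starProjection (U : Submodule 𝕜 E) [U.HasOrthogonalProjection] (x : E) :
    U.starProjection (U.starProjection x) = U.starProjection x :=
  DFunLike.congr_fun U.isIdempotentElem_starProjection x

theorem starProjection_starProjection_of_isOrtho (hUW : U ⟂ W) (x : E) :
    U.starProjection (W.starProjection x) = 0 :=
  DFunLike.congr_fun hUW.starProjection_comp_starProjection x

theorem crossPart_reflection (hUW : U ⟂ W) (x : E) :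
    crossPart U W T (U.reflection x) = -U.reflection (crossPart U W T x) := by
  simp only [crossPart_apply, Submodule.reflection_apply, map_sub, map_nsmul, map_add, map_zero,
    starProjection_starProjection, starProjection_starProjection_of_isOrtho hUW,
    starProjection_starProjection_of_isOrtho hUW.symm]
  module

theorem trace_mul_crossPart :
    (T * crossPart U W T).trace 𝕜 E
      = 2 * (U.starProjection * T * W.starProjection * T : E →ₗ[𝕜] E).trace 𝕜 E := by
  rw [crossPart, mul_add, map_add, LinearMap.trace_mul_comm 𝕜 T, ← mul_assoc T,
    LinearMap.trace_mul_comm 𝕜 _ (U.starProjection : E →ₗ[𝕜] E)]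
  simp only [mul_assoc, two_mul]

theorem trace_crossPart_mul_self (hUW : U ⟂ W) :
    (crossPart U W T * crossPart U W T).trace 𝕜 E
      = 2 * (U.starProjection * T * W.starProjection * T : E →ₗ[𝕜] E).trace 𝕜 E := by
  set P := U.starProjection.toLinearMap
  set Q := W.starProjection.toLinearMap
  have hPQ : P * Q = 0 := LinearMap.ext (starProjection_starProjection_of_isOrtho hUW)
  have hQP : Q * P = 0 := LinearMap.ext (starProjection_starProjection_of_isOrtho hUW.symm)
  have hPP : P * P = P := LinearMap.ext (starProjection_starProjection U)
  have hQQ : Q * Q = Q := LinearMap.ext (starProjection_starProjection W)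
  calc (crossPart U W T * crossPart U W T).trace 𝕜 E
      = (P * T * (Q * Q) * T * P + Q * T * (P * P) * T * Q
          + (P * T * (Q * P) * T * Q + Q * T * (P * Q) * T * P)).trace 𝕜 E := by
        congr 1
        rw [crossPart]
        noncomm_ring
    _ = (P * T * Q * T * P).trace 𝕜 E + (Q * (T * P * T * Q)).trace 𝕜 E := by
        rw [hPQ, hQP, hPP, hQQ]
        simp [mul_assoc]
    _ = (P * P * T * Q * T).trace 𝕜 E + (T * P * T * (Q * Q)).trace 𝕜 E := by
        rw [LinearMap.trace_mul_comm 𝕜 _ P, LinearMap.trace_mul_comm 𝕜 Q]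
        simp only [mul_assoc]
    _ = 2 * (P * T * Q * T).trace 𝕜 E := by
        rw [hPP, hQQ, mul_assoc T, mul_assoc T, LinearMap.trace_mul_comm 𝕜 T, two_mul]

end CrossPart

namespace IsDiagonalizedBy

variable {𝕜 E : Type*} [RCLike 𝕜] [NormedAddCommGroup E] [InnerProductSpace 𝕜 E] {d : ℕ}
  {T : E →ₗ[𝕜] E} {e : OrthonormalBasis (Fin d) 𝕜 E} {a κ : Fin d → ℝ} {U W : Submodule 𝕜 E}

theorem lt_finrank_of_crossPart [U.HasOrthogonalProjection] [W.HasOrthogonalProjection]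
    (hK : IsDiagonalizedBy (crossPart U W T) e κ) (hκ : Antitone κ) {i : Fin d} (hi : 0 < κ i) :
    (i : ℕ) < Module.finrank 𝕜 U := by
  have : FiniteDimensional 𝕜 E := e.toBasis.finiteDimensional_of_finite
  refine (lt_card_filter_pos_of_antitone hκ hi).trans_le <|
    hK.card_filter_pos_le_finrank U.orthogonalProjectionOnto.toLinearMap fun x hx ↦ ?_
  rw [inner_crossPart_self_of_mem_orthogonal (Submodule.orthogonalProjectionOnto_eq_zero_iff.1 hx),
    map_zero]

/-- For `W = Uᗮ` this is the Bloomfield–Watson trace inequality. -/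
theorem four_mul_re_trace_starProjection_le [U.HasOrthogonalProjection] [W.HasOrthogonalProjection]
    (hT : IsDiagonalizedBy T e a) (ha : Antitone a) (hUW : U ⟂ W) :
    4 * RCLike.re ((U.starProjection * T * W.starProjection * T : E →ₗ[𝕜] E).trace 𝕜 E)
      ≤ ∑ i : Fin d with i.val < Module.finrank 𝕜 U ∧ i.val < Module.finrank 𝕜 W,
          (a i - a i.rev) ^ 2 := by
  have : FiniteDimensional 𝕜 E := e.toBasis.finiteDimensional_of_finite
  have hd : Module.finrank 𝕜 E = d := by simpa using Module.finrank_eq_card_basis e.toBasis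
  obtain ⟨f, κ, hκ, hK⟩ :=
    exists_isDiagonalizedBy_antitone (isSymmetric_crossPart (U := U) (W := W) hT.isSymmetric) hd
  have hle : 2 * RCLike.re ((U.starProjection * T * W.starProjection * T : E →ₗ[𝕜] E).trace 𝕜 E)
      ≤ ∑ i, a i * κ i := by
    simpa [← Module.End.mul_eq_comp, trace_mul_crossPart] using
      hT.re_trace_comp_le hK (ha.monovary hκ)
  have hsq : ∑ i, κ i ^ 2
      = 2 * RCLike.re ((U.starProjection * T * W.starProjection * T : E →ₗ[𝕜] E).trace 𝕜 E) := by
    simpa [← Module.End.mul_eq_comp, trace_crossPart_mul_self hUW] using hK.re_trace_comp_self.symm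
  have hK' : IsDiagonalizedBy (crossPart W U T) f κ := crossPart_comm (U := U) (W := W) ▸ hK
  have hamgm := sum_mul_le_of_comp_perm_eq_neg (a := a) Fin.revPerm
    (hK.apply_rev_eq_neg hκ U.reflection (crossPart_reflection hUW))
    (s := {i | i.val < Module.finrank 𝕜 U ∧ i.val < Module.finrank 𝕜 W}) fun i hi ↦ by
      simpa using ⟨hK.lt_finrank_of_crossPart hκ hi, hK'.lt_finrank_of_crossPart hκ hi⟩
  simp only [Fin.revPerm_apply] at hamgm
  linarith

theorem four_mul_sum_block_le (hT : IsDiagonalizedBy T e a) (ha : Antitone a) {ι : Type*}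
    [Fintype ι] (b : OrthonormalBasis ι 𝕜 E) {s t : Finset ι} (hst : Disjoint s t) :
    4 * ∑ i ∈ s, ∑ j ∈ t, ‖⟪b i, T (b j)⟫_𝕜‖ ^ 2
      ≤ ∑ i : Fin d with i.val < #s ∧ i.val < #t, (a i - a i.rev) ^ 2 := by
  have : FiniteDimensional 𝕜 E := e.toBasis.finiteDimensional_of_finite
  have hb := b.orthonormal.linearIndependent
  have hortho := isOrtho_span_image b.orthonormal (disjoint_coe.2 hst)
  simpa only [re_trace_mul_starProjection_span_image hT.isSymmetric b, finrank_span_image hb]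
    using hT.four_mul_re_trace_starProjection_le ha hortho

theorem four_mul_sum_corner_le (hT : IsDiagonalizedBy T e a) (ha : Antitone a)
    (b : OrthonormalBasis (Fin d) 𝕜 E) {k n : Fin d} (hkn : k ≤ n) :
    4 * ∑ i ∈ Iic k, ∑ j ∈ Ioi n, ‖⟪b i, T (b j)⟫_𝕜‖ ^ 2
      ≤ ∑ i ∈ Iic k, ∑ j ∈ Ioi n, if j = i.rev then (a i - a j) ^ 2 else 0 := by
  have hdisj : Disjoint (Iic k) (Ioi n) := disjoint_left.2 fun i hi hi' ↦
    ((mem_Iic.1 hi).trans hkn).not_gt (mem_Ioi.1 hi')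
  calc _ ≤ ∑ i : Fin d with i.val < #(Iic k) ∧ i.val < #(Ioi n), (a i - a i.rev) ^ 2 :=
        hT.four_mul_sum_block_le ha b hdisj
    _ = ∑ i ∈ Iic k with n < i.rev, (a i - a i.rev) ^ 2 := by
        congr 1
        ext i
        simp only [mem_filter, mem_univ, true_and, mem_Iic, Fin.card_Iic, Fin.card_Ioi,
          Fin.le_def, Fin.lt_def, Fin.val_rev]
        lia
    _ = _ := by simp [sum_filter, sum_ite_eq']

end IsDiagonalizedBy

section Monge

variable {ι : Type*}

theorem sum_mul_nonneg_of_antitoneOn [LinearOrder ι] {s : Finset ι} {δ x : ι → ℝ}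
    (hδ : AntitoneOn δ s) (hδ0 : ∀ i ∈ s, 0 ≤ δ i) (hx : ∀ k ∈ s, 0 ≤ ∑ i ∈ s with i ≤ k, x i) :
    0 ≤ ∑ i ∈ s, δ i * x i := by
  induction s using Finset.induction_on_max generalizing δ with
  | empty => simp
  | insert m s hm ih =>
    have hms : m ∉ s := fun h ↦ (hm m h).false
    have hδm {i : ι} (hi : i ∈ s) : δ m ≤ δ i :=
      hδ (by simp [hi]) (by simp) (hm i hi).le
    have hrec : 0 ≤ ∑ i ∈ s, (δ i - δ m) * x i := by
      refine ih (fun i hi j hj hij ↦ ?_) (fun i hi ↦ sub_nonneg.2 (hδm hi)) fun k hk ↦ ?_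
      · exact sub_le_sub_right (hδ (by simp_all) (by simp_all) hij) _
      · have := hx k (mem_insert_of_mem hk)
        rwa [filter_insert, if_neg (hm k hk).not_ge] at this
    have htop : 0 ≤ ∑ i ∈ insert m s, x i := by
      have := hx m (mem_insert_self m s)
      rwa [filter_true_of_mem (by simpa using fun i hi ↦ (hm i hi).le)] at this
    calc 0 ≤ ∑ i ∈ s, (δ i - δ m) * x i + δ m * ∑ i ∈ insert m s, x i :=
          add_nonneg hrec (mul_nonneg (hδ0 m (mem_insert_self m s)) htop)
      _ = ∑ i ∈ insert m s, δ i * x i := by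
          simp only [sum_insert hms, sub_mul, sum_sub_distrib, mul_add, mul_sum]
          ring

theorem sum_Ico_succ_sub [LinearOrder ι] [LocallyFiniteOrder ι] [SuccOrder ι]
    [IsSuccArchimedean ι] (f : ι → ℝ) {i j : ι} (hij : i ≤ j) :
    ∑ n ∈ Ico i j, (f (Order.succ n) - f n) = f j - f i := by
  induction hij using Succ.rec with
  | rfl => simp
  | succ n hin ih =>
    by_cases hn : IsMax n
    · rw [hn.succ_eq, ih]
    · rw [← insert_Ico_right_eq_Ico_succ_of_not_isMax hin hn, sum_insert (by simp), ih]
      ring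

/-- Monge arrays: the mixed second differences of `w` are nonpositive. Stated for arbitrary, not
only consecutive, rows and columns. -/
def IsMonge {α β : Type*} [Preorder α] [Preorder β] (w : α → β → ℝ) : Prop :=
  ∀ ⦃i i'⦄, i ≤ i' → ∀ ⦃j j'⦄, j ≤ j' → w i j + w i' j' ≤ w i j' + w i' j

theorem sum_sum_eq_two_mul_sum_Ioi [LinearOrder ι] [Fintype ι] [LocallyFiniteOrderTop ι]
    [LocallyFiniteOrderBot ι] {f : ι → ι → ℝ} (hsymm : ∀ i j, f i j = f j i)
    (hdiag : ∀ i, f i i = 0) : ∑ i, ∑ j, f i j = 2 * ∑ i, ∑ j ∈ Ioi i, f i j := by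
  calc ∑ i, ∑ j, f i j = ∑ i, ∑ j ∈ {i}ᶜ, f i j :=
        sum_congr rfl fun i _ ↦ (sum_compl_add_sum {i} (f i)).symm.trans (by simp [hdiag])
    _ = ∑ i, ∑ j ∈ Ioi i, (f i j + f j i) :=
        (sum_sum_Ioi_add_eq_sum_sum_off_diag fun j i ↦ f i j).symm
    _ = 2 * ∑ i, ∑ j ∈ Ioi i, f i j := by simp only [hsymm, ← two_mul, mul_sum]

theorem sum_sum_Ioi_mul_eq_sum_succ_sub_mul [LinearOrder ι] [Fintype ι] [LocallyFiniteOrder ι]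
    [LocallyFiniteOrderTop ι] [LocallyFiniteOrderBot ι] [SuccOrder ι] [IsSuccArchimedean ι]
    {w : ι → ι → ℝ} (hdiag : ∀ i, w i i = 0) (A : ι → ι → ℝ) :
    ∑ i, ∑ j ∈ Ioi i, w i j * A i j
      = ∑ n, ∑ i ∈ Iic n, (w i (Order.succ n) - w i n) * ∑ j ∈ Ioi n, A i j := by
  calc ∑ i, ∑ j ∈ Ioi i, w i j * A i j
      = ∑ i, ∑ j ∈ Ioi i, ∑ n ∈ Ico i j, (w i (Order.succ n) - w i n) * A i j := by
        refine sum_congr rfl fun i _ ↦ sum_congr rfl fun j hj ↦ ?_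
        rw [← sum_mul, sum_Ico_succ_sub (w i) (mem_Ioi.1 hj).le, hdiag, sub_zero]
    _ = ∑ i, ∑ n ∈ Ici i, ∑ j ∈ Ioi n, (w i (Order.succ n) - w i n) * A i j := by
        refine sum_congr rfl fun i _ ↦ sum_comm' fun j n ↦ ?_
        simp only [mem_Ioi, mem_Ico, mem_Ici]
        exact ⟨fun ⟨_, hin, hnj⟩ ↦ ⟨hnj, hin⟩, fun ⟨hnj, hin⟩ ↦ ⟨hin.trans_lt hnj, hin, hnj⟩⟩
    _ = ∑ n, ∑ i ∈ Iic n, (w i (Order.succ n) - w i n) * ∑ j ∈ Ioi n, A i j := by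
        simp only [mul_sum]
        exact sum_comm' fun i n ↦ by simp

theorem IsMonge.sum_sum_mul_nonneg [LinearOrder ι] [Fintype ι] [LocallyFiniteOrder ι]
    [LocallyFiniteOrderTop ι] [LocallyFiniteOrderBot ι] [SuccOrder ι] [IsSuccArchimedean ι]
    {w A : ι → ι → ℝ} (hw : IsMonge w) (hw_symm : ∀ i j, w i j = w j i)
    (hw_diag : ∀ i, w i i = 0) (hA_symm : ∀ i j, A i j = A j i)
    (hA : ∀ k n, k ≤ n → 0 ≤ ∑ i ∈ Iic k, ∑ j ∈ Ioi n, A i j) : 0 ≤ ∑ i, ∑ j, w i j * A i j := by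
  rw [sum_sum_eq_two_mul_sum_Ioi (by simp [hw_symm, hA_symm]) (by simp [hw_diag]),
    sum_sum_Ioi_mul_eq_sum_succ_sub_mul hw_diag]
  refine mul_nonneg zero_le_two <| sum_nonneg fun n _ ↦ ?_
  have hanti : Antitone fun i ↦ w i (Order.succ n) - w i n := fun i i' hi ↦ by
    linarith [hw hi (Order.le_succ n)]
  have hnonneg : 0 ≤ w n (Order.succ n) - w n n := by
    linarith [hw (Order.le_succ n) (Order.le_succ n), hw_symm n (Order.succ n),
      hw_diag n, hw_diag (Order.succ n)]
  refine sum_mul_nonneg_of_antitoneOn (hanti.antitoneOn _)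
    (fun i hi ↦ hnonneg.trans (hanti (mem_Iic.1 hi))) fun k hk ↦ ?_
  have hfilter : {i ∈ Iic n | i ≤ k} = Iic k := by
    ext i
    simpa using fun h : i ≤ k ↦ h.trans (mem_Iic.1 hk)
  rw [hfilter]
  exact hA k n (mem_Iic.1 hk)

end Monge

theorem div_add_le_div_add {x x' y : ℝ} (hx : 0 ≤ x) (hxx' : x ≤ x') (hy : 0 ≤ y) :
    x / (x + y) ≤ x' / (x' + y) := by
  rcases hx.eq_or_lt with rfl | hx
  · rw [zero_div]
    exact div_nonneg hxx' (add_nonneg hxx' hy)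
  · have hx' : 0 < x' := hx.trans_le hxx'
    rw [div_le_div_iff₀ (by positivity) (by positivity)]
    linarith [mul_le_mul_of_nonneg_right hxx' hy]

theorem mul_div_add_sub_mul_div_add {x y y' : ℝ} (hx : 0 ≤ x) (hy : 0 ≤ y) (hy' : 0 ≤ y') :
    x * y' / (x + y') - x * y / (x + y) = (y' - y) * (x / (x + y) * (x / (x + y'))) := by
  rcases hx.eq_or_lt with rfl | hx
  · simp
  · field_simp
    ring

theorem mul_div_add_supermodular {x x' y y' : ℝ} (hx : 0 ≤ x) (hy : 0 ≤ y) (hxx' : x ≤ x')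
    (hyy' : y ≤ y') :
    x * y' / (x + y') + x' * y / (x' + y) ≤ x * y / (x + y) + x' * y' / (x' + y') := by
  have hx' : 0 ≤ x' := hx.trans hxx'
  have hy' : 0 ≤ y' := hy.trans hyy'
  suffices x * y' / (x + y') - x * y / (x + y) ≤ x' * y' / (x' + y') - x' * y / (x' + y) by linarith
  rw [mul_div_add_sub_mul_div_add hx hy hy', mul_div_add_sub_mul_div_add hx' hy hy']
  exact mul_le_mul_of_nonneg_left
    (mul_le_mul (div_add_le_div_add hx hxx' hy) (div_add_le_div_add hx hxx' hy') (by positivity)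
      (by positivity)) (sub_nonneg.2 hyy')

section pij

variable {d : ℕ} {p : Fin d → ℝ}

theorem pij_self (p : Fin d → ℝ) (i : Fin d) : pij p i i = 0 := by simp [pij]

theorem pij_comm (p : Fin d → ℝ) (i j : Fin d) : pij p i j = pij p j i := by
  simp only [pij, and_comm, add_comm (p i), sub_sq_comm (p i)]

/-- If `p i = p j = 0`, the quotient on the right is `0 / 0 = 0`. -/
theorem pij_eq_add_sub (hp0 : ∀ i, 0 ≤ p i) (i j : Fin d) :
    pij p i j = p i + p j - 4 * (p i * p j / (p i + p j)) := by
  rcases eq_or_ne (p i + p j) 0 with h | h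
  · have hij := (add_eq_zero_iff_of_nonneg (hp0 i) (hp0 j)).1 h
    simp [pij, hij]
  · have hij : ¬(p i = 0 ∧ p j = 0) := fun hij ↦ h (by simp [hij])
    rw [pij, if_neg hij]
    field_simp
    ring

theorem isMonge_pij (hp : Antitone p) (hp0 : ∀ i, 0 ≤ p i) : IsMonge (pij p) :=
  fun i i' hi j j' hj ↦ by
    simp only [pij_eq_add_sub hp0]
    linarith [mul_div_add_supermodular (hp0 i') (hp0 j') (hp hi) (hp hj)]

end pij

theorem exists_orthonormalBasis_coe_eq {𝕜 E ι : Type*} [RCLike 𝕜] [NormedAddCommGroup E]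
    [InnerProductSpace 𝕜 E] [FiniteDimensional 𝕜 E] [Fintype ι]
    (hι : Module.finrank 𝕜 E = Fintype.card ι) {v : ι → E} (hv : Orthonormal 𝕜 v) :
    ∃ b : OrthonormalBasis ι 𝕜 E, ⇑b = v := by
  obtain ⟨b, hb⟩ := Orthonormal.exists_orthonormalBasis_extension_of_card_eq hι (s := Set.univ)
    (hv.comp _ Subtype.val_injective)
  exact ⟨b, funext fun i ↦ hb i (Set.mem_univ i)⟩

theorem maxQFI_upper_bound_general {𝕜 E : Type*} [RCLike 𝕜] [NormedAddCommGroup E]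
    [InnerProductSpace 𝕜 E] {d : ℕ} {T : E →ₗ[𝕜] E} {e : OrthonormalBasis (Fin d) 𝕜 E}
    {a : Fin d → ℝ} (hT : IsDiagonalizedBy T e a) (ha : Antitone a) {w : Fin d → Fin d → ℝ}
    (hw : IsMonge w) (hw_symm : ∀ i j, w i j = w j i) (hw_diag : ∀ i, w i i = 0)
    (ξ : OrthonormalBasis (Fin d) 𝕜 E) :
    2 * ∑ i, ∑ j, w i j * ‖⟪ξ i, T (ξ j)⟫_𝕜‖ ^ 2
      ≤ (1 / 2) * ∑ k, w k k.rev * (a k - a k.rev) ^ 2 := by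
  have hsum : 0 ≤ ∑ i, ∑ j, w i j *
      ((if j = i.rev then (a i - a j) ^ 2 else 0) - 4 * ‖⟪ξ i, T (ξ j)⟫_𝕜‖ ^ 2) := by
    refine hw.sum_sum_mul_nonneg hw_symm hw_diag (fun i j ↦ ?_) fun k n hkn ↦ ?_
    · have hrev : j = i.rev ↔ i = j.rev := by rw [eq_comm, Fin.rev_eq_iff]
      simp only [hrev, sub_sq_comm (a i), ← hT.isSymmetric (ξ i), norm_inner_symm _ (ξ j)]
    · have := hT.four_mul_sum_corner_le ha ξ hkn
      simpa only [sum_sub_distrib, ← mul_sum, sub_nonneg]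
  simp only [mul_sub, sum_sub_distrib, mul_ite, mul_zero, sum_ite_eq', mem_univ, if_true,
    mul_left_comm _ (4 : ℝ), ← mul_sum] at hsum
  linarith

/-- Upper-bound part of Theorem 1: for any Hermitian generator `h` with decreasingly
ordered eigenvalues `a` (with orthonormal eigenbasis `e`), any decreasing nonnegative
eigenvalues `p` of the state, and any orthonormal basis `ξ`, the quantum Fisher
information `2 ∑ᵢⱼ p_{i,j} |⟨ξᵢ, h ξⱼ⟩|²` is at most
`(1/2) ∑ₖ p_{k,d-k+1} (h_k - h_{d-k+1})²`. -/
theorem maxQFI_upper_bound {d : ℕ} (hd : 1 ≤ d)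
    (h : Matrix (Fin d) (Fin d) ℂ) (hh : h.IsHermitian)
    (a : Fin d → ℝ) (ha : Antitone a)
    (e : Fin d → EuclideanSpace ℂ (Fin d)) (he : Orthonormal ℂ e)
    (heig : ∀ k, Matrix.toEuclideanLin h (e k) = (a k : ℂ) • e k)
    (p : Fin d → ℝ) (hp : Antitone p) (hp0 : ∀ i, 0 ≤ p i)
    (ξ : Fin d → EuclideanSpace ℂ (Fin d)) (hξ : Orthonormal ℂ ξ) :
    2 * ∑ i, ∑ j, pij p i j *
        ‖(inner ℂ (ξ i) (Matrix.toEuclideanLin h (ξ j)) : ℂ)‖ ^ 2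
      ≤ (1 / 2) * ∑ k, pij p k k.rev * (a k - a k.rev) ^ 2 := by
  obtain ⟨e, rfl⟩ := exists_orthonormalBasis_coe_eq (by simp) he
  obtain ⟨ξ, rfl⟩ := exists_orthonormalBasis_coe_eq (by simp) hξ
  exact maxQFI_upper_bound_general heig ha (isMonge_pij hp hp0) (pij_comm p) (pij_self p) ξ
end

section
/- Let d ≥ 2, let h be a d×d complex Hermitian matrix with an orthonormal eigenbasis e_1, …, e_d of ℂ^d, h e_k = h_k e_k, where h_1 ≥ … ≥ h_d. Define φ_k = (e_k + e_{d−k+1})/√2 if 2k < d+1, φ_k = e_k if 2k = d+1, and φ_k = (e_k − e_{d−k+1})/√2 if 2k > d+1. Then for every k ∈ {1, …, d−1}, ∑_{i=1}^{k} ∑_{j=k+1}^{d} |⟨φ_i, h φ_j⟩|² = (1/4) ∑_{i=1}^{min(k, d−k)} (h_i − h_{d−i+1})². (The basis (φ_k) saturates the Bloomfield–Watson inequality for every off-diagonal block of h.) -/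
/-- The optimal orthonormal basis built from the eigenbasis `e` of the generator
(0-based: index `k` corresponds to the 1-based index `k+1`, and `k.rev` to `d-k+1`):
`φ_k = (e_k + e_{d-k+1})/√2` if `2k < d+1`, `φ_k = e_k` if `2k = d+1`,
`φ_k = (e_k - e_{d-k+1})/√2` if `2k > d+1`. -/
noncomputable def optPhi {d : ℕ} (e : Fin d → EuclideanSpace ℂ (Fin d)) (k : Fin d) :
    EuclideanSpace ℂ (Fin d) :=
  if 2 * (k.val + 1) < d + 1 then ((Real.sqrt 2 : ℂ))⁻¹ • (e k + e k.rev)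
  else if 2 * (k.val + 1) = d + 1 then e k
  else ((Real.sqrt 2 : ℂ))⁻¹ • (e k - e k.rev)

/-!
Each `φ_k` lies in the plane spanned by `e_k` and its mirror image `e_{d-k+1}`. These planes are
invariant under `h` and mutually orthogonal, so the only entries of `h` in the basis `φ` off the
diagonal are those pairing `φ_k` with `φ_{d-k+1}`, and such an entry is half the difference of the
two eigenvalues. The block with rows `1..k` contains one of them for each `i ≤ min (k, d - k)`.
-/

section Eigenvectors

variable {𝕜 E : Type*} [RCLike 𝕜] [NormedAddCommGroup E] [InnerProductSpace 𝕜 E]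

lemma inner_add_map_sub_of_eigenvectors (T : E →ₗ[𝕜] E) {u v : E} {α β : 𝕜}
    (norm_u : ‖u‖ = 1) (norm_v : ‖v‖ = 1) (huv : inner 𝕜 u v = 0)
    (hu : T u = α • u) (hv : T v = β • v) :
    inner 𝕜 (u + v) (T (u - v)) = α - β := by
  have hvu : inner 𝕜 v u = 0 := inner_eq_zero_symm.mp huv
  simp [hu, hv, inner_add_left, inner_sub_right, inner_smul_right, huv, hvu,
    inner_self_eq_norm_sq_to_K, norm_u, norm_v]

lemma inner_map_eq_zero_of_mem_span_eigenvectors {ι : Type*} (T : E →ₗ[𝕜] E) {e : ι → E}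
    {a : ι → 𝕜} (he : Orthonormal 𝕜 e) (heig : ∀ i, T (e i) = a i • e i) {s t : Set ι}
    (hst : Disjoint s t) {x y : E} (hx : x ∈ Submodule.span 𝕜 (e '' s))
    (hy : y ∈ Submodule.span 𝕜 (e '' t)) :
    inner 𝕜 x (T y) = 0 := by
  have span_orthogonal : Submodule.span 𝕜 (e '' s) ⟂ Submodule.span 𝕜 (e '' t) := by
    rw [Submodule.isOrtho_span]
    rintro _ ⟨i, hi, rfl⟩ _ ⟨j, hj, rfl⟩
    exact he.inner_eq_zero (hst.ne_of_mem hi hj)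
  have span_invariant : (Submodule.span 𝕜 (e '' t)).map T ≤ Submodule.span 𝕜 (e '' t) := by
    rw [Submodule.map_span_le]
    rintro _ ⟨j, hj, rfl⟩
    rw [heig]
    exact Submodule.smul_mem _ _ (Submodule.subset_span ⟨j, hj, rfl⟩)
  exact span_orthogonal.inner_eq hx (span_invariant (Submodule.mem_map_of_mem hy))

end Eigenvectors

lemma sum_block_ite_eq_rev {M : Type*} [AddCommMonoid M] {d : ℕ} (f : Fin d → M) (k : ℕ) :
    ∑ i ∈ Finset.univ.filter (fun i : Fin d => i.val < k),
      ∑ j ∈ Finset.univ.filter (fun j : Fin d => k ≤ j.val), (if j = i.rev then f i else 0)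
      = ∑ i ∈ Finset.univ.filter (fun i : Fin d => i.val < min k (d - k)), f i := by
  have rev_in_block (i : Fin d) : k ≤ i.rev.val ↔ i.val < d - k := by
    rw [Fin.val_rev]
    omega
  simp only [Finset.sum_ite_eq', Finset.mem_filter, Finset.mem_univ, true_and, rev_in_block,
    ← Finset.sum_filter, Finset.filter_filter, lt_min_iff]

section OptPhi

variable {d : ℕ} (e : Fin d → EuclideanSpace ℂ (Fin d))

lemma optPhi_of_lt_rev {k : Fin d} (hk : k < k.rev) :
    optPhi e k = (Real.sqrt 2 : ℂ)⁻¹ • (e k + e k.rev) := by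
  rw [Fin.lt_def, Fin.val_rev] at hk
  rw [optPhi, if_pos (by omega)]

lemma optPhi_of_rev_lt {k : Fin d} (hk : k.rev < k) :
    optPhi e k = (Real.sqrt 2 : ℂ)⁻¹ • (e k - e k.rev) := by
  rw [Fin.lt_def, Fin.val_rev] at hk
  rw [optPhi, if_neg (by omega), if_neg (by omega)]

lemma optPhi_mem_span (k : Fin d) :
    optPhi e k ∈ Submodule.span ℂ (e '' {k, k.rev}) := by
  have mem : e k ∈ Submodule.span ℂ (e '' {k, k.rev}) :=
    Submodule.subset_span ⟨k, by simp, rfl⟩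
  have mem_rev : e k.rev ∈ Submodule.span ℂ (e '' {k, k.rev}) :=
    Submodule.subset_span ⟨k.rev, by simp, rfl⟩
  unfold optPhi
  split_ifs
  · exact Submodule.smul_mem _ _ (add_mem mem mem_rev)
  · exact mem
  · exact Submodule.smul_mem _ _ (sub_mem mem mem_rev)

variable {e} (T : EuclideanSpace ℂ (Fin d) →ₗ[ℂ] EuclideanSpace ℂ (Fin d)) {a : Fin d → ℂ}
  (he : Orthonormal ℂ e) (heig : ∀ k, T (e k) = a k • e k)
include he heig

lemma inner_optPhi_map_optPhi_rev {i : Fin d} (hi : i < i.rev) :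
    inner ℂ (optPhi e i) (T (optPhi e i.rev)) = (a i.rev - a i) / 2 := by
  have inv_sqrt_two_mul_self : (Real.sqrt 2 : ℂ)⁻¹ * (Real.sqrt 2 : ℂ)⁻¹ = 1 / 2 := by
    rw [← mul_inv, ← Complex.ofReal_mul, Real.mul_self_sqrt zero_le_two, Complex.ofReal_ofNat,
      one_div]
  have eigenvalue_gap : inner ℂ (e i.rev + e i) (T (e i.rev - e i)) = a i.rev - a i :=
    inner_add_map_sub_of_eigenvectors T (he.norm_eq_one _) (he.norm_eq_one _)
      (he.inner_eq_zero hi.ne') (heig _) (heig _)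
  rw [optPhi_of_lt_rev e hi, optPhi_of_rev_lt e (by rwa [Fin.rev_rev]), Fin.rev_rev, map_smul,
    inner_smul_left, inner_smul_right, add_comm, eigenvalue_gap, map_inv₀, Complex.conj_ofReal,
    ← mul_assoc, inv_sqrt_two_mul_self]
  ring

lemma inner_optPhi_map_optPhi_eq_zero {i j : Fin d} (hij : j ≠ i) (hij_rev : j ≠ i.rev) :
    inner ℂ (optPhi e i) (T (optPhi e j)) = 0 := by
  have disjoint_pairs : Disjoint ({i, i.rev} : Set (Fin d)) {j, j.rev} := by
    simp [hij, hij_rev, Fin.rev_eq_iff]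
  exact inner_map_eq_zero_of_mem_span_eigenvectors T he heig disjoint_pairs
    (optPhi_mem_span e i) (optPhi_mem_span e j)

lemma norm_inner_optPhi_map_optPhi_sq {i j : Fin d} (hij : i < j) :
    ‖(inner ℂ (optPhi e i) (T (optPhi e j)) : ℂ)‖ ^ 2
      = if j = i.rev then (1 / 4) * ‖a i - a i.rev‖ ^ 2 else 0 := by
  split_ifs with hj
  · subst hj
    rw [inner_optPhi_map_optPhi_rev T he heig hij, norm_div, norm_sub_rev, Complex.norm_ofNat]
    ring
  · rw [inner_optPhi_map_optPhi_eq_zero T he heig hij.ne' hj, norm_zero, zero_pow two_ne_zero]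

end OptPhi

theorem optPhi_saturates_BloomfieldWatson_general {d : ℕ}
    (T : EuclideanSpace ℂ (Fin d) →ₗ[ℂ] EuclideanSpace ℂ (Fin d)) {a : Fin d → ℂ}
    {e : Fin d → EuclideanSpace ℂ (Fin d)} (he : Orthonormal ℂ e)
    (heig : ∀ k, T (e k) = a k • e k) (k : ℕ) :
    ∑ i ∈ Finset.univ.filter (fun i : Fin d => i.val < k),
      ∑ j ∈ Finset.univ.filter (fun j : Fin d => k ≤ j.val),
        ‖(inner ℂ (optPhi e i) (T (optPhi e j)) : ℂ)‖ ^ 2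
      = (1 / 4) * ∑ i ∈ Finset.univ.filter (fun i : Fin d => i.val < min k (d - k)),
          ‖a i - a i.rev‖ ^ 2 := by
  rw [Finset.mul_sum, ← sum_block_ite_eq_rev]
  refine Finset.sum_congr rfl fun i hi => Finset.sum_congr rfl fun j hj => ?_
  have hij : i < j := (Finset.mem_filter.mp hi).2.trans_le (Finset.mem_filter.mp hj).2
  exact norm_inner_optPhi_map_optPhi_sq T he heig hij

/-- The optimal basis `φ` saturates the Bloomfield–Watson inequality: for every
`k ∈ {1, …, d-1}`, the squared Hilbert–Schmidt norm of the off-diagonal block of `h`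
in the basis `φ` (rows `1..k`, columns `k+1..d`, here 0-based rows `i < k` and columns
`j ≥ k`) equals `(1/4) ∑_{i=1}^{min(k,d-k)} (h_i - h_{d-i+1})²`. -/
theorem optPhi_saturates_BloomfieldWatson {d : ℕ} (hd : 2 ≤ d)
    (h : Matrix (Fin d) (Fin d) ℂ) (hh : h.IsHermitian)
    (a : Fin d → ℝ) (ha : Antitone a)
    (e : Fin d → EuclideanSpace ℂ (Fin d)) (he : Orthonormal ℂ e)
    (heig : ∀ k, Matrix.toEuclideanLin h (e k) = (a k : ℂ) • e k)
    (k : ℕ) (hk1 : 1 ≤ k) (hk2 : k ≤ d - 1) :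
    ∑ i ∈ Finset.univ.filter (fun i : Fin d => i.val < k),
      ∑ j ∈ Finset.univ.filter (fun j : Fin d => k ≤ j.val),
        ‖(inner ℂ (optPhi e i) (Matrix.toEuclideanLin h (optPhi e j)) : ℂ)‖ ^ 2
      = (1 / 4) * ∑ i ∈ Finset.univ.filter (fun i : Fin d => i.val < min k (d - k)),
          (a i - a i.rev) ^ 2 := by
  simpa only [← Complex.ofReal_sub, Complex.norm_real, Real.norm_eq_abs, sq_abs] using
    optPhi_saturates_BloomfieldWatson_general (Matrix.toEuclideanLin h) he heig k
end

section
/- Let d ≥ 3 and let p_1 ≥ … ≥ p_d ≥ 0 be real numbers. Then for all indices 1 ≤ i < j < l ≤ d, p_{i,l} ≥ p_{i,j} + p_{j,l}. (Lemma 1(i) of the Supplemental Material.) -/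
section OrderedField

variable {K : Type*} [Field K] [LinearOrder K] [IsStrictOrderedRing K]

theorem sub_div_add_le_sub_div_add {x x' y y' : K} (hy' : 0 ≤ y') (hy : y' ≤ y) (hyx : y ≤ x)
    (hx : x ≤ x') : (x - y) / (x + y) ≤ (x' - y') / (x' + y') := by
  have hy0 : 0 ≤ y := hy'.trans hy
  obtain rfl | hxy := hyx.eq_or_lt
  · rw [sub_self, zero_div]
    exact div_nonneg (sub_nonneg.2 (hy.trans hx)) (add_nonneg (hy0.trans hx) hy')
  · have hx0 : 0 < x := hy0.trans_lt hxy
    have hx'0 : 0 < x' := hx0.trans_le hx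
    have hcross : x * y' ≤ x' * y := mul_le_mul hx hy hy' hx'0.le
    rw [div_le_div_iff₀ (add_pos_of_pos_of_nonneg hx0 hy0) (add_pos_of_pos_of_nonneg hx'0 hy')]
    linarith

theorem pij_triangle_general {a b c : K} (hc : 0 ≤ c) (hcb : c ≤ b) (hba : b ≤ a) :
    (a - b) ^ 2 / (a + b) + (b - c) ^ 2 / (b + c) ≤ (a - c) ^ 2 / (a + c) := by
  have hab : (a - b) / (a + b) ≤ (a - c) / (a + c) :=
    sub_div_add_le_sub_div_add hc hcb hba le_rfl
  have hbc : (b - c) / (b + c) ≤ (a - c) / (a + c) :=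
    sub_div_add_le_sub_div_add hc le_rfl hcb hba
  calc
    (a - b) ^ 2 / (a + b) + (b - c) ^ 2 / (b + c)
    _ = (a - b) * ((a - b) / (a + b)) + (b - c) * ((b - c) / (b + c)) := by ring
    _ ≤ (a - b) * ((a - c) / (a + c)) + (b - c) * ((a - c) / (a + c)) :=
      add_le_add (mul_le_mul_of_nonneg_left hab (sub_nonneg.2 hba))
        (mul_le_mul_of_nonneg_left hbc (sub_nonneg.2 hcb))
    _ = (a - c) ^ 2 / (a + c) := by ring

end OrderedField

-- The two cases of `pij` agree because `0 / 0 = 0`.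
theorem pij_eq_sq_div {d : ℕ} (p : Fin d → ℝ) (i j : Fin d) :
    pij p i j = (p i - p j) ^ 2 / (p i + p j) := by
  unfold pij
  split_ifs with h
  · rw [h.1, h.2, add_zero, div_zero]
  · rfl

/-- Lemma 1(i): for `p_1 ≥ … ≥ p_d ≥ 0` and indices `i < j < l`,
`p_{i,l} ≥ p_{i,j} + p_{j,l}`. -/
theorem pij_triangle {d : ℕ} (hd : 3 ≤ d)
    (p : Fin d → ℝ) (hp : Antitone p) (hp0 : ∀ i, 0 ≤ p i)
    (i j l : Fin d) (hij : i < j) (hjl : j < l) :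
    pij p i j + pij p j l ≤ pij p i l := by
  simpa only [pij_eq_sq_div] using pij_triangle_general (hp0 l) (hp hjl.le) (hp hij.le)
end

section
/- Let d ≥ 2 and let p_1 ≥ … ≥ p_d ≥ 0 be real numbers. Then there exist nonnegative real numbers q_{1,2}, q_{2,3}, …, q_{d−1,d} such that, defining q_{i,j} = ∑_{k=i}^{j−1} q_{k,k+1} for 1 ≤ i < j ≤ d, one has q_{i,j} = p_{i,j} whenever j = d − i + 1, and q_{i,j} ≥ p_{i,j} for all 1 ≤ i < j ≤ d. (Proposition 1 of the Supplemental Material.) -/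
/-!
The function `(a - b)² / (a + b)` of two nonnegative reals has decreasing differences, so
`w i j = p_{i,j}` satisfies the quadrangle inequality for `i ≤ j`, and it vanishes for `i = j`.
For any such `w` there is a potential `x` with `x j - x i = w i j` on the two adjacent antidiagonals
`i + j = N - 1` and `i + j = N`. The defect `e i j = w i j - (x j - x i)` again satisfies the
quadrangle inequality and vanishes on both antidiagonals. If `i + j < N` and `(i, j)` straddles the
centre, then `(N - 1 - j, j)` and `(N - 1 - j, j + 1)` lie on the antidiagonals, so the quadrangle
inequality reads `e i j ≤ e i (j + 1)`; stepping up to the antidiagonal gives `e i j ≤ 0`. If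
instead `j` is left of the centre, then `e i j ≤ e i (N - j)` because `e j j = e j (N - j) = 0`. The
case `i + j > N` is symmetric, and `q k = x (k + 1) - x k`.
-/

/-- The quadrangle inequality of Knuth and Yao, which lets bounds on `w` be moved from one pair to
another. It constrains `w i j` only for `i ≤ j`. -/
def QuadrangleInequality {ι M : Type*} [LE ι] [Add M] [LE M] (w : ι → ι → M) : Prop :=
  ∀ ⦃a b c d : ι⦄, a ≤ b → b ≤ c → c ≤ d → w a c + w b d ≤ w a d + w b c

namespace QuadrangleInequality

section Antidiagonal

variable {M : Type*} [AddMonoid M] [Preorder M] {e : ℕ → ℕ → M} {N : ℕ}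
  (he : QuadrangleInequality e)
  (hN : ∀ ⦃i j⦄, i ≤ j → i = N - j → e i j = 0)
  (hN' : ∀ ⦃i j⦄, i ≤ j → i = N - 1 - j → e i j = 0)

include he hN hN'

theorem nonpos_of_add_le_of_le_two_mul {i j : ℕ} (hle : i + j ≤ N) (hij : i ≤ j)
    (hj : N ≤ 2 * j + 1) : e i j ≤ 0 := by
  induction hn : N - (i + j) generalizing j with
  | zero => exact (hN hij (by omega)).le
  | succ n ih =>
    have hzero : e (N - 1 - j) j = 0 := hN' (by omega) rfl
    have hzero' : e (N - 1 - j) (j + 1) = 0 := hN (by omega) (by omega)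
    have hstep : e i j ≤ e i (j + 1) := by
      simpa only [hzero, hzero', add_zero] using
        he (show i ≤ N - 1 - j by omega) (show N - 1 - j ≤ j by omega) (Nat.le_add_right j 1)
    exact hstep.trans (ih (by omega) (by omega) (by omega) (by omega))

theorem nonpos_of_le_add_of_two_mul_le {i j : ℕ} (hle : N ≤ i + j) (hi : 2 * i ≤ N) :
    e i j ≤ 0 := by
  induction i with
  | zero => exact (hN (by omega) (by omega)).le
  | succ i ih =>
    rcases hle.eq_or_lt with heq | hlt
    · exact (hN (by omega) (by omega)).le
    have hzero : e i (N - 1 - i) = 0 := hN' (by omega) (by omega)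
    have hzero' : e (i + 1) (N - 1 - i) = 0 := hN (by omega) (by omega)
    have hstep : e (i + 1) j ≤ e i j := by
      simpa only [hzero, hzero', add_zero, zero_add] using
        he (Nat.le_add_right i 1) (show i + 1 ≤ N - 1 - i by omega) (show N - 1 - i ≤ j by omega)
    exact hstep.trans (ih (by omega) (by omega))

theorem nonpos_of_antidiagonals_eq_zero (hdiag : ∀ i, e i i = 0) {i j : ℕ} (hij : i ≤ j) :
    e i j ≤ 0 := by
  rcases le_total (i + j) N with hle | hle
  · rcases le_or_gt N (2 * j + 1) with hj | hj
    · exact nonpos_of_add_le_of_le_two_mul he hN hN' hle hij hj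
    · have hzero : e j (N - j) = 0 := hN (by omega) (by omega)
      have hreflect : e i j ≤ e i (N - j) := by
        simpa only [hzero, hdiag, add_zero] using he hij le_rfl (show j ≤ N - j by omega)
      exact hreflect.trans
        (nonpos_of_add_le_of_le_two_mul he hN hN' (by omega) (by omega) (by omega))
  · rcases le_or_gt (2 * i) N with hi | hi
    · exact nonpos_of_le_add_of_two_mul_le he hN hN' hle hi
    · have hzero : e (N - i) i = 0 := hN (by omega) rfl
      have hreflect : e i j ≤ e (N - i) j := by
        simpa only [hzero, hdiag, add_zero, zero_add] using
          he (show N - i ≤ i by omega) le_rfl hij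
      exact hreflect.trans (nonpos_of_le_add_of_two_mul_le he hN hN' (by omega) (by omega))

end Antidiagonal

end QuadrangleInequality

section Potential

variable {M : Type*} [AddCommGroup M]

/-- The left half of `zigzagPotential`: the total drop of `w` over the steps
`(m, N - 1 - m) → (m + 1, N - 1 - m)`, `m < i`, from one antidiagonal to the next. -/
def zigzagSum (w : ℕ → ℕ → M) (N i : ℕ) : M :=
  ∑ m ∈ Finset.range i, (w m (N - 1 - m) - w (m + 1) (N - 1 - m))

/-- The potential whose differences agree with `w` on the antidiagonals `i + j = N - 1` and
`i + j = N`. Since `N - i` is truncated at `0`, it also agrees with `w 0` at every `i ≥ N`. -/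
def zigzagPotential (w : ℕ → ℕ → M) (N i : ℕ) : M :=
  if 2 * i ≤ N then zigzagSum w N i else zigzagSum w N (N - i) + w (N - i) i

theorem zigzagPotential_of_le {w : ℕ → ℕ → M} (hdiag : ∀ i, w i i = 0) {N i : ℕ}
    (hi : N ≤ 2 * i) :
    zigzagPotential w N i = zigzagSum w N (N - i) + w (N - i) i := by
  rcases hi.eq_or_lt with rfl | hi
  · simp [zigzagPotential, two_mul, hdiag]
  · exact if_neg hi.not_ge

theorem zigzagPotential_sub_of_eq_sub {w : ℕ → ℕ → M} (hdiag : ∀ i, w i i = 0) {N i j : ℕ}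
    (hij : i ≤ j) (h : i = N - j) :
    zigzagPotential w N j - zigzagPotential w N i = w i j := by
  rw [zigzagPotential_of_le hdiag (by omega), ← h, zigzagPotential, if_pos (by omega),
    add_sub_cancel_left]

theorem zigzagPotential_sub_of_eq_pred_sub {w : ℕ → ℕ → M} (hdiag : ∀ i, w i i = 0) {N i j : ℕ}
    (hij : i ≤ j) (h : i = N - 1 - j) :
    zigzagPotential w N j - zigzagPotential w N i = w i j := by
  obtain hN | hN : N ≤ j ∨ N = i + j + 1 := by omega
  · exact zigzagPotential_sub_of_eq_sub hdiag hij (by omega)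
  rcases hij.eq_or_lt with rfl | hij
  · rw [sub_self, hdiag]
  · rw [zigzagPotential_of_le hdiag (by omega), zigzagPotential, if_pos (by omega),
      show N - j = i + 1 by omega, zigzagSum, zigzagSum, Finset.sum_range_succ,
      show N - 1 - i = j by omega]
    abel

variable [PartialOrder M] [IsOrderedAddMonoid M]

namespace QuadrangleInequality

theorem sub_potential {ι : Type*} [LE ι] {w : ι → ι → M} (hw : QuadrangleInequality w)
    (x : ι → M) : QuadrangleInequality fun i j ↦ w i j - (x j - x i) := by
  intro a b c d hab hbc hcd
  calc w a c - (x c - x a) + (w b d - (x d - x b))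
      = w a c + w b d - (x c + x d - x a - x b) := by abel
    _ ≤ w a d + w b c - (x c + x d - x a - x b) := sub_le_sub_right (hw hab hbc hcd) _
    _ = w a d - (x d - x a) + (w b c - (x c - x b)) := by abel

theorem le_zigzagPotential_sub {w : ℕ → ℕ → M} (hw : QuadrangleInequality w)
    (hdiag : ∀ i, w i i = 0) (N : ℕ) {i j : ℕ} (hij : i ≤ j) :
    w i j ≤ zigzagPotential w N j - zigzagPotential w N i := by
  refine sub_nonpos.1 (nonpos_of_antidiagonals_eq_zero (N := N)
    (hw.sub_potential (zigzagPotential w N)) ?_ ?_ ?_ hij)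
  · exact fun _ _ hij h ↦ sub_eq_zero.2 (zigzagPotential_sub_of_eq_sub hdiag hij h).symm
  · exact fun _ _ hij h ↦ sub_eq_zero.2 (zigzagPotential_sub_of_eq_pred_sub hdiag hij h).symm
  · simp [hdiag]

end QuadrangleInequality

end Potential

section TriangularDiscrimination

variable {K : Type*} [Field K]

/-- The summand `(a - b)² / (a + b)` of the triangular discrimination of two distributions. The
convention `0 / 0 = 0` gives `triDiscr 0 0 = 0`, as in the definition of `pij`. -/
def triDiscr (a b : K) : K := (a - b) ^ 2 / (a + b)

@[simp]
theorem triDiscr_self (a : K) : triDiscr a a = 0 := by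
  simp [triDiscr]

theorem pij_eq_triDiscr {d : ℕ} (p : Fin d → ℝ) (i j : Fin d) :
    pij p i j = triDiscr (p i) (p j) := by
  rw [pij, triDiscr]
  split_ifs with h
  · simp [h]
  · rfl

variable [LinearOrder K] [IsStrictOrderedRing K]

theorem triDiscr_nonneg {a b : K} (ha : 0 ≤ a) (hb : 0 ≤ b) : 0 ≤ triDiscr a b :=
  div_nonneg (sq_nonneg _) (add_nonneg ha hb)

theorem triDiscr_sub_triDiscr {a a' b : K} (ha : 0 ≤ a) (ha' : 0 ≤ a') (hb : 0 ≤ b) :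
    triDiscr a b - triDiscr a' b = (a - a') * (1 - 4 * (b / (a + b) * (b / (a' + b)))) := by
  rcases hb.eq_or_lt with rfl | hb
  · simp [triDiscr, sq]
  · have hab : a + b ≠ 0 := by positivity
    have hab' : a' + b ≠ 0 := by positivity
    rw [triDiscr, triDiscr]
    field_simp
    ring

theorem div_add_self_le_div_add_self {a b b' : K} (ha : 0 ≤ a) (hb' : 0 ≤ b') (hb : b' ≤ b) :
    b' / (a + b') ≤ b / (a + b) := by
  rcases hb'.eq_or_lt with rfl | hb'
  · rw [zero_div]; positivity
  · have : 0 < b := hb'.trans_le hb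
    rw [div_le_div_iff₀ (by positivity) (by positivity)]
    linarith [mul_le_mul_of_nonneg_left hb ha]

theorem triDiscr_add_triDiscr_le {a a' b b' : K} (ha' : 0 ≤ a') (hb' : 0 ≤ b') (ha : a' ≤ a)
    (hb : b' ≤ b) : triDiscr a b + triDiscr a' b' ≤ triDiscr a b' + triDiscr a' b := by
  have ha₀ : 0 ≤ a := ha'.trans ha
  have hb₀ : 0 ≤ b := hb'.trans hb
  have hratio : b' / (a + b') * (b' / (a' + b')) ≤ b / (a + b) * (b / (a' + b)) :=
    mul_le_mul (div_add_self_le_div_add_self ha₀ hb' hb) (div_add_self_le_div_add_self ha' hb' hb)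
      (by positivity) (by positivity)
  have hdiff : triDiscr a b - triDiscr a' b ≤ triDiscr a b' - triDiscr a' b' := by
    rw [triDiscr_sub_triDiscr ha₀ ha' hb₀, triDiscr_sub_triDiscr ha₀ ha' hb']
    gcongr
  linarith

theorem quadrangleInequality_triDiscr {ι : Type*} [Preorder ι] {P : ι → K} (hP : Antitone P)
    (hP₀ : 0 ≤ P) : QuadrangleInequality fun i j ↦ triDiscr (P i) (P j) :=
  fun _ b _ d hab _ hcd ↦ triDiscr_add_triDiscr_le (hP₀ b) (hP₀ d) (hP hab) (hP hcd)

end TriangularDiscrimination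

theorem antitone_extend_finVal {α : Type*} [Preorder α] [Zero α] {d : ℕ} {p : Fin d → α}
    (hp : Antitone p) (hp₀ : 0 ≤ p) : Antitone (Function.extend Fin.val p 0) := by
  intro a b hab
  by_cases hb : b < d
  · have hval (i : Fin d) : Function.extend Fin.val p 0 i.val = p i :=
      Fin.val_injective.extend_apply p 0 i
    exact (hval ⟨b, hb⟩).trans_le ((hp hab).trans_eq (hval ⟨a, hab.trans_lt hb⟩).symm)
  · rw [Function.extend_apply' _ _ b fun ⟨i, hi⟩ ↦ hb (hi ▸ i.isLt)]
    exact Function.extend_nonneg hp₀ le_rfl a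

/-- Proposition 1 of the Supplemental Material: there exist nonnegative consecutive
coefficients `q k` (representing `q_{k,k+1}`, 0-based) such that the induced
coefficients `q_{i,j} = ∑_{k=i}^{j-1} q_{k,k+1}` satisfy `q_{i,j} = p_{i,j}` for the
central coefficients (`j = d - i + 1`, 0-based `j = i.rev`) and `q_{i,j} ≥ p_{i,j}`
for all `i < j`. -/
theorem exists_q_coefficients {d : ℕ} (hd : 2 ≤ d)
    (p : Fin d → ℝ) (hp : Antitone p) (hp0 : ∀ i, 0 ≤ p i) :
    ∃ q : ℕ → ℝ, (∀ k, 0 ≤ q k) ∧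
      (∀ i j : Fin d, i < j →
        ((j = i.rev → (∑ k ∈ Finset.Ico i.val j.val, q k) = pij p i j) ∧
          pij p i j ≤ ∑ k ∈ Finset.Ico i.val j.val, q k)) := by
  let P : ℕ → ℝ := Function.extend Fin.val p 0
  have hP : Antitone P := antitone_extend_finVal hp hp0
  have hP₀ : 0 ≤ P := Function.extend_nonneg hp0 le_rfl
  let w (i j : ℕ) : ℝ := triDiscr (P i) (P j)
  have hdiag (i : ℕ) : w i i = 0 := triDiscr_self _
  have hpij (i j : Fin d) : pij p i j = w i j := by
    simp only [w, P, Fin.val_injective.extend_apply, pij_eq_triDiscr]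
  let x : ℕ → ℝ := zigzagPotential w (d - 1)
  have hx {i j : ℕ} : i ≤ j → w i j ≤ x j - x i :=
    (quadrangleInequality_triDiscr hP hP₀).le_zigzagPotential_sub hdiag (d - 1)
  refine ⟨fun k ↦ x (k + 1) - x k, fun k ↦ ?_, fun i j hij ↦ ?_⟩
  · exact (triDiscr_nonneg (hP₀ k) (hP₀ (k + 1))).trans (hx k.le_succ)
  · rw [Finset.sum_Ico_sub x hij.le, hpij]
    refine ⟨fun hj ↦ zigzagPotential_sub_of_eq_sub hdiag hij.le ?_, hx hij.le⟩
    rw [hj, Fin.val_rev]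
    omega
end

section
/- Let A and B be d×d complex Hermitian matrices and let C = A + B. Denote by a_1 ≥ … ≥ a_d, b_1 ≥ … ≥ b_d, and c_1 ≥ … ≥ c_d the eigenvalues of A, B, and C in decreasing order. Then for every r with 1 ≤ r ≤ ⌈d/2⌉, ∑_{i=1}^{r} (c_i − c_{d−i+1}) ≤ ∑_{i=1}^{r} (a_i − a_{d−i+1} + b_i − b_{d−i+1}); that is, the vector d(C) is weakly majorized by d(A) + d(B). (Lemma 3 of the Supplemental Material.) -/
/-!
The idea is Ky Fan's principle: for an operator `T` with orthonormal eigenbasis `u` and eigenvalues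
`a`, the quadratic form `re ⟪x, T x⟫` is the average of the `a k` with weights `‖⟪u k, x⟫‖ ^ 2`.
Summed over `r` orthonormal vectors, each weight is at most `1` by Bessel's inequality and the total
weight is `r`, so the sum of the quadratic form lies between the sums of the `r` smallest and the
`r` largest eigenvalues. Evaluate this on the eigenvectors of `A + B` for its first `r` and its last
`r` eigenvalues: there the quadratic form of `A + B`, the sum of those of `A` and `B`, equals the
corresponding eigenvalue.
-/

section FractionalSelection

variable {ι R : Type*} {s : Finset ι}

theorem exists_forall_mem_le_and_forall_notMem_le [Finite ι] [LinearOrder R] [Nonempty R]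
    {a : ι → R} (hs : ∀ i ∈ s, ∀ k ∉ s, a k ≤ a i) :
    ∃ t, (∀ k ∈ s, t ≤ a k) ∧ ∀ k ∉ s, a k ≤ t := by
  obtain rfl | hne := s.eq_empty_or_nonempty
  · obtain ⟨t, ht⟩ := (Set.finite_range a).bddAbove
    exact ⟨t, by simp, fun k _ => ht ⟨k, rfl⟩⟩
  · obtain ⟨i, hi, hmin⟩ := s.exists_min_image a hne
    exact ⟨a i, hmin, hs i hi⟩

variable [Fintype ι] [Ring R] [LinearOrder R] [IsOrderedRing R] {a p : ι → R}

theorem sum_mul_le_sum_of_threshold {t : R} (hs : ∀ k ∈ s, t ≤ a k) (hsc : ∀ k ∉ s, a k ≤ t)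
    (hp₀ : ∀ k, 0 ≤ p k) (hp₁ : ∀ k, p k ≤ 1) (hp : ∑ k, p k = s.card) :
    ∑ k, a k * p k ≤ ∑ k ∈ s, a k := by
  classical
  have pointwise (k : ι) : a k * p k ≤ t * p k + if k ∈ s then a k - t else 0 := by
    split_ifs with hk
    · rw [← sub_le_iff_le_add', ← sub_mul]
      exact mul_le_of_le_one_right (sub_nonneg.2 (hs k hk)) (hp₁ k)
    · simpa using mul_le_mul_of_nonneg_right (hsc k hk) (hp₀ k)
  calc ∑ k, a k * p k
      ≤ ∑ k, (t * p k + if k ∈ s then a k - t else 0) := Finset.sum_le_sum fun k _ => pointwise k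
    _ = t * s.card + ∑ k ∈ s, (a k - t) := by
        simp [Finset.sum_add_distrib, ← Finset.mul_sum, hp]
    _ = ∑ k ∈ s, a k := by simp [Finset.sum_sub_distrib, Nat.cast_comm]

theorem sum_mul_le_sum_of_forall_le (hs : ∀ i ∈ s, ∀ k ∉ s, a k ≤ a i)
    (hp₀ : ∀ k, 0 ≤ p k) (hp₁ : ∀ k, p k ≤ 1) (hp : ∑ k, p k = s.card) :
    ∑ k, a k * p k ≤ ∑ k ∈ s, a k :=
  let ⟨_, hs', hsc⟩ := exists_forall_mem_le_and_forall_notMem_le hs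
  sum_mul_le_sum_of_threshold hs' hsc hp₀ hp₁ hp

end FractionalSelection

section KyFan

open scoped InnerProductSpace

variable {𝕜 E : Type*} [RCLike 𝕜] [NormedAddCommGroup E] [InnerProductSpace 𝕜 E]
variable {ι κ : Type*} [Fintype ι] {T : E →ₗ[𝕜] E} {a : ι → ℝ} {w : κ → E}

theorem exists_orthonormalBasis_coe_eq_s8 [FiniteDimensional 𝕜 E] {u : ι → E} (hu : Orthonormal 𝕜 u)
    (hE : Module.finrank 𝕜 E = Fintype.card ι) : ∃ b : OrthonormalBasis ι 𝕜 E, ⇑b = u :=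
  let ⟨b, hb⟩ := (hu.comp _ Subtype.val_injective).exists_orthonormalBasis_extension_of_card_eq
    (s := Set.univ) hE
  ⟨b, funext fun i => hb i trivial⟩

theorem re_inner_map_self_eq_sum (u : OrthonormalBasis ι 𝕜 E)
    (hT : ∀ k, T (u k) = (a k : 𝕜) • u k) (x : E) :
    RCLike.re ⟪x, T x⟫_𝕜 = ∑ k, a k * ‖⟪u k, x⟫_𝕜‖ ^ 2 := by
  have map_x : T x = ∑ k, ⟪u k, x⟫_𝕜 • (a k : 𝕜) • u k := by
    conv_lhs => rw [← u.sum_repr' x]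
    simp only [map_sum, map_smul, hT]
  rw [map_x, inner_sum, map_sum]
  refine Finset.sum_congr rfl fun k _ => ?_
  rw [inner_smul_right, inner_smul_right, mul_left_comm, RCLike.re_ofReal_mul,
    inner_mul_symm_re_eq_norm, norm_mul, norm_inner_symm x, sq]

theorem sum_re_inner_map_self_le_sum_eigenvalues (u : OrthonormalBasis ι 𝕜 E)
    (hT : ∀ k, T (u k) = (a k : 𝕜) • u k) (hw : Orthonormal 𝕜 w) {s : Finset ι} {t : Finset κ}
    (hst : s.card = t.card) (hs : ∀ i ∈ s, ∀ k ∉ s, a k ≤ a i) :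
    ∑ i ∈ t, RCLike.re ⟪w i, T (w i)⟫_𝕜 ≤ ∑ k ∈ s, a k := by
  have weight_le_one (k : ι) : ∑ i ∈ t, ‖⟪u k, w i⟫_𝕜‖ ^ 2 ≤ 1 := by
    simpa [norm_inner_symm] using hw.sum_inner_products_le (u k) (s := t)
  have total_weight : ∑ k, ∑ i ∈ t, ‖⟪u k, w i⟫_𝕜‖ ^ 2 = s.card := by
    rw [Finset.sum_comm]
    simp [u.sum_sq_norm_inner_right, hw.norm_eq_one, hst]
  calc ∑ i ∈ t, RCLike.re ⟪w i, T (w i)⟫_𝕜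
      = ∑ k, a k * ∑ i ∈ t, ‖⟪u k, w i⟫_𝕜‖ ^ 2 := by
        simp only [re_inner_map_self_eq_sum u hT, Finset.mul_sum]
        exact Finset.sum_comm
    _ ≤ ∑ k ∈ s, a k :=
        sum_mul_le_sum_of_forall_le hs (fun _ => by positivity) weight_le_one total_weight

theorem sum_eigenvalues_le_sum_re_inner_map_self (u : OrthonormalBasis ι 𝕜 E)
    (hT : ∀ k, T (u k) = (a k : 𝕜) • u k) (hw : Orthonormal 𝕜 w) {s : Finset ι} {t : Finset κ}
    (hst : s.card = t.card) (hs : ∀ i ∈ s, ∀ k ∉ s, a i ≤ a k) :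
    ∑ k ∈ s, a k ≤ ∑ i ∈ t, RCLike.re ⟪w i, T (w i)⟫_𝕜 := by
  have hnegT (k : ι) : (-T) (u k) = ((-a k : ℝ) : 𝕜) • u k := by simp [hT]
  simpa using sum_re_inner_map_self_le_sum_eigenvalues u hnegT hw hst
    fun i hi k hk => neg_le_neg (hs i hi k hk)

variable {d : ℕ}

theorem sum_re_inner_sub_rev_le {a : Fin d → ℝ} {w : Fin d → E} (u : OrthonormalBasis (Fin d) 𝕜 E)
    (hT : ∀ k, T (u k) = (a k : 𝕜) • u k) (ha : Antitone a) (hw : Orthonormal 𝕜 w)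
    {s : Finset (Fin d)} (hs : IsLowerSet (s : Set (Fin d))) :
    ∑ i ∈ s, (RCLike.re ⟪w i, T (w i)⟫_𝕜 - RCLike.re ⟪w i.rev, T (w i.rev)⟫_𝕜)
      ≤ ∑ i ∈ s, (a i - a i.rev) := by
  have le_of_mem_of_notMem : ∀ i ∈ s, ∀ k ∉ s, i ≤ k := fun i hi k hk =>
    le_of_not_ge fun hki => hk (hs hki hi)
  have upper : ∑ i ∈ s, RCLike.re ⟪w i, T (w i)⟫_𝕜 ≤ ∑ i ∈ s, a i :=
    sum_re_inner_map_self_le_sum_eigenvalues u hT hw rfl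
      fun i hi k hk => ha (le_of_mem_of_notMem i hi k hk)
  have lower : ∑ i ∈ s, a i.rev ≤ ∑ i ∈ s, RCLike.re ⟪w i.rev, T (w i.rev)⟫_𝕜 :=
    sum_eigenvalues_le_sum_re_inner_map_self (u.reindex Fin.revPerm) (by simp [hT])
      (hw.comp _ Fin.rev_injective) rfl
      fun i hi k hk => ha (Fin.rev_le_rev.2 (le_of_mem_of_notMem i hi k hk))
  simpa only [Finset.sum_sub_distrib] using sub_le_sub upper lower

theorem weak_majorization_of_sum_general [FiniteDimensional 𝕜 E] (hE : Module.finrank 𝕜 E = d)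
    {A B : E →ₗ[𝕜] E} {a b c : Fin d → ℝ} (ha : Antitone a) (hb : Antitone b) {u v w : Fin d → E}
    (hu : Orthonormal 𝕜 u) (hv : Orthonormal 𝕜 v) (hw : Orthonormal 𝕜 w)
    (hAu : ∀ k, A (u k) = (a k : 𝕜) • u k) (hBv : ∀ k, B (v k) = (b k : 𝕜) • v k)
    (hCw : ∀ k, (A + B) (w k) = (c k : 𝕜) • w k) (r : ℕ) :
    ∑ i ∈ Finset.univ.filter (fun i : Fin d => i.val < r), (c i - c i.rev)
      ≤ ∑ i ∈ Finset.univ.filter (fun i : Fin d => i.val < r),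
          (a i - a i.rev + (b i - b i.rev)) := by
  obtain ⟨u, rfl⟩ := exists_orthonormalBasis_coe_eq_s8 hu (by simpa using hE)
  obtain ⟨v, rfl⟩ := exists_orthonormalBasis_coe_eq_s8 hv (by simpa using hE)
  have c_eq (i : Fin d) :
      c i = RCLike.re ⟪w i, A (w i)⟫_𝕜 + RCLike.re ⟪w i, B (w i)⟫_𝕜 := by
    rw [← map_add, ← inner_add_right, ← LinearMap.add_apply, hCw, inner_smul_right,
      inner_self_eq_norm_sq_to_K, hw.norm_eq_one]
    simp
  have isLowerSet_lt : IsLowerSet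
      (Finset.univ.filter (fun i : Fin d => i.val < r) : Set (Fin d)) := fun i j hji hi => by
    simpa using lt_of_le_of_lt (Fin.le_def.1 hji) (by simpa using hi)
  simp only [c_eq, add_sub_add_comm, Finset.sum_add_distrib]
  exact add_le_add (sum_re_inner_sub_rev_le u hAu ha hw isLowerSet_lt)
    (sum_re_inner_sub_rev_le v hBv hb hw isLowerSet_lt)

end KyFan

/-- Lemma 3 of the Supplemental Material: if `C = A + B` with `A, B, C` Hermitian with
decreasingly ordered eigenvalues `a, b, c` (each witnessed by an orthonormal
eigenbasis), then `d(C)` is weakly majorized by `d(A) + d(B)`: for every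
`1 ≤ r ≤ ⌈d/2⌉`, `∑_{i=1}^r (c_i − c_{d−i+1}) ≤ ∑_{i=1}^r (a_i − a_{d−i+1} + b_i − b_{d−i+1})`. -/
theorem weak_majorization_of_sum {d : ℕ} (hd : 1 ≤ d)
    (A B : Matrix (Fin d) (Fin d) ℂ) (hA : A.IsHermitian) (hB : B.IsHermitian)
    (a b c : Fin d → ℝ) (ha : Antitone a) (hb : Antitone b) (hc : Antitone c)
    (u v w : Fin d → EuclideanSpace ℂ (Fin d))
    (hu : Orthonormal ℂ u) (hv : Orthonormal ℂ v) (hw : Orthonormal ℂ w)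
    (hAu : ∀ k, Matrix.toEuclideanLin A (u k) = (a k : ℂ) • u k)
    (hBv : ∀ k, Matrix.toEuclideanLin B (v k) = (b k : ℂ) • v k)
    (hCw : ∀ k, Matrix.toEuclideanLin (A + B) (w k) = (c k : ℂ) • w k)
    (r : ℕ) (hr1 : 1 ≤ r) (hr2 : r ≤ (d + 1) / 2) :
    ∑ i ∈ Finset.univ.filter (fun i : Fin d => i.val < r), (c i - c i.rev)
      ≤ ∑ i ∈ Finset.univ.filter (fun i : Fin d => i.val < r),
          (a i - a i.rev + (b i - b i.rev)) :=
  weak_majorization_of_sum_general finrank_euclideanSpace_fin ha hb hu hv hw hAu hBv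
    (by simpa using hCw) r
end

section
/- Let d ≥ 1, let p_1 ≥ … ≥ p_d ≥ 0 be real numbers, and define φ_p : ℝ_+^d → ℝ by φ_p(x) = ∑_{i=1}^d p_i x_{[i]}², where x_{[1]} ≥ … ≥ x_{[d]} is the decreasing rearrangement of x. If x, y ∈ ℝ_+^d (vectors with nonnegative entries) satisfy the weak majorization x ≺_w y, i.e., ∑_{i=1}^k x_{[i]} ≤ ∑_{i=1}^k y_{[i]} for all k = 1, …, d, then φ_p(x) ≤ φ_p(y). -/
/-- The decreasing rearrangement of a vector `x : Fin d → ℝ`: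
`dsort x 0 ≥ dsort x 1 ≥ …` is `x` sorted in decreasing order. -/
noncomputable def dsort {d : ℕ} (x : Fin d → ℝ) (i : Fin d) : ℝ :=
  x (Tuple.sort x i.rev)

/-!
Let `g` be the right derivative of a convex function `f`, so that `f t - f s ≥ g s * (t - s)`.
Write `a` and `b` for the decreasing rearrangements of `x` and `y`. If `f` is nondecreasing above
every entry of `a`, the weights `p i * g (a i)` are nonnegative and decreasing, and Abel summation
against the nonnegative partial sums of `b - a` gives
`∑ p i * (f (b i) - f (a i)) ≥ ∑ p i * g (a i) * (b i - a i) ≥ 0`.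
For `φ_p`, take `f t = t ^ 2`, which is nondecreasing on `[0, ∞)`.
-/

theorem dsort_antitone {d : ℕ} (x : Fin d → ℝ) : Antitone (dsort x) :=
  fun _ _ hij => Tuple.monotone_sort x (Fin.rev_le_rev.2 hij)

theorem sum_mul_nonneg_of_antitoneOn_s9 {ι R : Type*} [LinearOrder ι] [Ring R] [PartialOrder R]
    [IsOrderedRing R] {s : Finset ι} {w a : ι → R} (hw : AntitoneOn w s)
    (hw0 : ∀ i ∈ s, 0 ≤ w i) (ha : ∀ j ∈ s, 0 ≤ ∑ i ∈ s with i ≤ j, a i) :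
    0 ≤ ∑ i ∈ s, w i * a i := by
  induction s using Finset.induction_on_max generalizing w with
  | empty => simp
  | insert m s hm ih =>
    have hms : m ∉ s := fun h => (hm m h).false
    have hmw : ∀ i ∈ s, w m ≤ w i := fun i hi =>
      hw (Finset.mem_insert_of_mem hi) (Finset.mem_insert_self m s) (hm i hi).le
    have hpart : 0 ≤ ∑ i ∈ s, (w i - w m) * a i := by
      refine ih (fun i hi j hj hij => ?_) (fun i hi => sub_nonneg.2 (hmw i hi)) (fun j hj => ?_)
      · exact sub_le_sub_right
          (hw (Finset.mem_insert_of_mem hi) (Finset.mem_insert_of_mem hj) hij) _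
      · have hj_sum := ha j (Finset.mem_insert_of_mem hj)
        rwa [Finset.filter_insert, if_neg (hm j hj).not_ge] at hj_sum
    have htotal : 0 ≤ ∑ i ∈ insert m s, a i := by
      have hle : ∀ i ∈ insert m s, i ≤ m :=
        (Finset.forall_mem_insert _ _ _).2 ⟨le_rfl, fun i hi => (hm i hi).le⟩
      have hm_sum := ha m (Finset.mem_insert_self m s)
      rwa [Finset.filter_true_of_mem hle] at hm_sum
    calc 0 ≤ ∑ i ∈ s, (w i - w m) * a i + w m * ∑ i ∈ insert m s, a i :=
          add_nonneg hpart (mul_nonneg (hw0 m (Finset.mem_insert_self m s)) htotal)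
      _ = ∑ i ∈ insert m s, w i * a i := by
          simp only [Finset.sum_insert hms, sub_mul, Finset.sum_sub_distrib, mul_add,
            Finset.mul_sum]
          abel

theorem rightDeriv_mul_sub_le_sub_of_convexOn {S : Set ℝ} {f : ℝ → ℝ} {x y : ℝ}
    (hf : ConvexOn ℝ S f) (hx : x ∈ interior S) (hy : y ∈ S) :
    derivWithin f (Set.Ioi x) x * (y - x) ≤ f y - f x := by
  rcases lt_trichotomy x y with hxy | rfl | hyx
  · have hslope := hf.rightDeriv_le_slope_of_mem_interior hx hy hxy
    rwa [slope_def_field, le_div_iff₀ (sub_pos.2 hxy)] at hslope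
  · simp
  · have hslope := (hf.slope_le_leftDeriv_of_mem_interior hy hx hyx).trans
      (hf.leftDeriv_le_rightDeriv_of_mem_interior hx)
    rw [slope_def_field, div_le_iff₀ (sub_pos.2 hyx)] at hslope
    linarith

theorem sum_mul_comp_le_sum_mul_comp_of_convexOn {ι : Type*} [LinearOrder ι]
    {s : Finset ι} {f : ℝ → ℝ} {c : ℝ}
    (hf : ConvexOn ℝ Set.univ f) (hfc : MonotoneOn f (Set.Ici c))
    {p a b : ι → ℝ} (hp : AntitoneOn p s) (hp0 : ∀ i ∈ s, 0 ≤ p i)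
    (ha : AntitoneOn a s) (hac : ∀ i ∈ s, c ≤ a i)
    (hab : ∀ j ∈ s, ∑ i ∈ s with i ≤ j, a i ≤ ∑ i ∈ s with i ≤ j, b i) :
    ∑ i ∈ s, p i * f (a i) ≤ ∑ i ∈ s, p i * f (b i) := by
  let g : ℝ → ℝ := fun t => derivWithin f (Set.Ioi t) t
  have hg : Monotone g := by
    simpa only [interior_univ, monotoneOn_univ] using hf.monotoneOn_rightDeriv
  have hg0 : ∀ i ∈ s, 0 ≤ g (a i) := fun i hi =>
    (hfc.mono fun _ ht => (hac i hi).trans (le_of_lt ht)).derivWithin_nonneg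
  have hpg : AntitoneOn (fun i => p i * g (a i)) s := fun i hi j hj hij =>
    mul_le_mul (hp hi hj hij) (hg (ha hi hj hij)) (hg0 j hj) (hp0 i hi)
  have hlinear : 0 ≤ ∑ i ∈ s, p i * g (a i) * (b i - a i) := by
    refine sum_mul_nonneg_of_antitoneOn_s9 hpg
      (fun i hi => mul_nonneg (hp0 i hi) (hg0 i hi)) (fun j hj => ?_)
    rw [Finset.sum_sub_distrib]
    exact sub_nonneg.2 (hab j hj)
  have htangent : ∀ i, g (a i) * (b i - a i) ≤ f (b i) - f (a i) := fun i =>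
    rightDeriv_mul_sub_le_sub_of_convexOn hf (by simp) (Set.mem_univ _)
  rw [← sub_nonneg, ← Finset.sum_sub_distrib]
  calc 0 ≤ ∑ i ∈ s, p i * g (a i) * (b i - a i) := hlinear
    _ ≤ ∑ i ∈ s, (p i * f (b i) - p i * f (a i)) := Finset.sum_le_sum fun i hi => by
        rw [mul_assoc, ← mul_sub]
        exact mul_le_mul_of_nonneg_left (htangent i) (hp0 i hi)

theorem phi_p_mono_weak_majorization_general {d : ℕ} {f : ℝ → ℝ} {c : ℝ}
    (hf : ConvexOn ℝ Set.univ f) (hfc : MonotoneOn f (Set.Ici c))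
    {p : Fin d → ℝ} (hp : Antitone p) (hp0 : ∀ i, 0 ≤ p i)
    {x y : Fin d → ℝ} (hx : ∀ i, c ≤ x i)
    (hmaj : ∀ k : ℕ, k ≤ d →
      ∑ i ∈ Finset.univ.filter (fun i : Fin d => i.val < k), dsort x i
        ≤ ∑ i ∈ Finset.univ.filter (fun i : Fin d => i.val < k), dsort y i) :
    ∑ i, p i * f (dsort x i) ≤ ∑ i, p i * f (dsort y i) := by
  refine sum_mul_comp_le_sum_mul_comp_of_convexOn hf hfc (hp.antitoneOn _) (fun i _ => hp0 i)
    ((dsort_antitone x).antitoneOn _) (fun i _ => hx _) (fun j _ => ?_)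
  simpa only [Nat.lt_succ_iff, Fin.val_fin_le] using hmaj (j.val + 1) j.isLt

/-- Schur-convexity consequence (Lemma 5): for decreasing nonnegative weights `p`,
the function `φ_p(x) = ∑ᵢ pᵢ x_{[i]}²` is monotone under weak majorization of
nonnegative vectors: `x ≺_w y` implies `φ_p(x) ≤ φ_p(y)`. -/
theorem phi_p_mono_weak_majorization {d : ℕ} (hd : 1 ≤ d)
    (p : Fin d → ℝ) (hp : Antitone p) (hp0 : ∀ i, 0 ≤ p i)
    (x y : Fin d → ℝ) (hx : ∀ i, 0 ≤ x i) (hy : ∀ i, 0 ≤ y i)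
    (hmaj : ∀ k : ℕ, k ≤ d →
      ∑ i ∈ Finset.univ.filter (fun i : Fin d => i.val < k), dsort x i
        ≤ ∑ i ∈ Finset.univ.filter (fun i : Fin d => i.val < k), dsort y i) :
    ∑ i, p i * (dsort x i) ^ 2 ≤ ∑ i, p i * (dsort y i) ^ 2 := by
  exact phi_p_mono_weak_majorization_general even_two.convexOn_pow
    (fun _ hs _ _ hst => pow_le_pow_left₀ hs hst 2) hp hp0 hx hmaj
end

section
/- Let d ≥ 2 and let p_1 ≥ … ≥ p_d ≥ 0 be real numbers. Then the sequence i ↦ p_{i,d−i+1} is weakly decreasing for 1 ≤ i ≤ ⌈d/2⌉; that is, p_{1,d} ≥ p_{2,d−1} ≥ … ≥ p_{⌈d/2⌉, d−⌈d/2⌉+1}, and all these values are nonnegative. -/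
section LinearOrderedField

variable {K : Type*} [Field K] [LinearOrder K] [IsStrictOrderedRing K] {a b c e : K}

theorem sub_div_add_le_sub_div_add_s10 (hb : 0 < b) (he : 0 ≤ e) (hba : b ≤ a) (hec : e ≤ c) :
    (b - c) / (b + c) ≤ (a - e) / (a + e) := by
  have ha : 0 < a := hb.trans_le hba
  have hc : 0 ≤ c := he.trans hec
  have cross : b * e ≤ a * c := mul_le_mul hba hec he ha.le
  rw [div_le_div_iff₀ (by positivity) (by positivity)]
  linarith

-- In `(x - y)² / (x + y) = (x - y) * ((x - y) / (x + y))` both factors are nonnegative for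
-- `0 ≤ y ≤ x`, and both increase when `x` grows and `y` shrinks.
theorem sub_sq_div_add_le_sub_sq_div_add (he : 0 ≤ e) (hec : e ≤ c) (hcb : c ≤ b) (hba : b ≤ a) :
    (b - c) ^ 2 / (b + c) ≤ (a - e) ^ 2 / (a + e) := by
  have hc : 0 ≤ c := he.trans hec
  have hb : 0 ≤ b := hc.trans hcb
  have ha : 0 ≤ a := hb.trans hba
  have hea : e ≤ a := hec.trans (hcb.trans hba)
  obtain rfl | hb_pos := hb.eq_or_lt
  · obtain rfl : c = 0 := le_antisymm hcb hc
    simpa using div_nonneg (sq_nonneg (a - e)) (add_nonneg ha he)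
  · calc (b - c) ^ 2 / (b + c) = (b - c) * ((b - c) / (b + c)) := by rw [sq, mul_div_assoc]
      _ ≤ (a - e) * ((a - e) / (a + e)) :=
        mul_le_mul (sub_le_sub hba hec) (sub_div_add_le_sub_div_add_s10 hb_pos he hba hec)
          (div_nonneg (sub_nonneg.2 hcb) (add_nonneg hb hc)) (sub_nonneg.2 hea)
      _ = (a - e) ^ 2 / (a + e) := by rw [sq, mul_div_assoc]

end LinearOrderedField

theorem le_rev_iff_val_lt_half {d : ℕ} {i : Fin d} : i ≤ i.rev ↔ i.val < (d + 1) / 2 := by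
  rw [Fin.le_def, Fin.val_rev]
  omega

section Coefficients

variable {d : ℕ} {p : Fin d → ℝ} {i j k l : Fin d}

theorem pij_eq_div (p : Fin d → ℝ) (i j : Fin d) :
    pij p i j = (p i - p j) ^ 2 / (p i + p j) := by
  unfold pij
  split_ifs with h
  · simp [h.1, h.2]
  · rfl

theorem pij_nonneg (h : 0 ≤ p i + p j) : 0 ≤ pij p i j := by
  rw [pij_eq_div]
  exact div_nonneg (sq_nonneg _) h

theorem pij_le_pij_of_nested (hp : Antitone p) (hl : 0 ≤ p l)
    (hij : i ≤ j) (hjk : j ≤ k) (hkl : k ≤ l) : pij p j k ≤ pij p i l := by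
  rw [pij_eq_div, pij_eq_div]
  exact sub_sq_div_add_le_sub_sq_div_add hl (hp hkl) (hp hjk) (hp hij)

end Coefficients

/-- For `p_1 ≥ … ≥ p_d ≥ 0`, the central coefficients `i ↦ p_{i,d−i+1}`
(0-based `pij p i i.rev`) are weakly decreasing and nonnegative for
`1 ≤ i ≤ ⌈d/2⌉` (0-based `i.val < (d+1)/2`). -/
theorem central_coefficients_antitone_nonneg {d : ℕ} (hd : 2 ≤ d)
    (p : Fin d → ℝ) (hp : Antitone p) (hp0 : ∀ i, 0 ≤ p i) :
    (∀ i j : Fin d, i ≤ j → j.val < (d + 1) / 2 → pij p j j.rev ≤ pij p i i.rev) ∧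
    (∀ i : Fin d, i.val < (d + 1) / 2 → 0 ≤ pij p i i.rev) := by
  refine ⟨fun i j hij hj => ?_, fun i _ => pij_nonneg (add_nonneg (hp0 i) (hp0 i.rev))⟩
  have hj_rev : j ≤ j.rev := le_rev_iff_val_lt_half.2 hj
  exact pij_le_pij_of_nested hp (hp0 i.rev) hij hj_rev (Fin.rev_le_rev.2 hij)
end

section
/- Let N ≥ 1 and n ≥ 1 be integers and let β ≥ 0 be real. Then ∑ over all N-tuples (m_1, …, m_N) with m_i ∈ {0, …, n} of σ²/cosh(βσ), where σ = ∑_i (m_i − n/2), is at most (∑ over the same tuples of e^{βσ}) · N n(n+2)/12. (Equivalently, (4/Z_β^N) ∑_k q(k) k²/cosh(βk) ≤ (4/3) N j(j+1) with n = 2j: the negative term in the quantum Fisher information K_B is at most of order N, so the N²-scaling of K_B comes entirely from the positive term.) -/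
/-- The centered total spin of a configuration `m` of `N` spins, each taking values in
`{0, …, n}` (with `n = 2j`): `σ(m) = ∑ᵢ (mᵢ − n/2)`. -/
noncomputable def centeredSum {N n : ℕ} (m : Fin N → Fin (n + 1)) : ℝ :=
  ∑ i, (((m i : ℕ) : ℝ) - n / 2)

/-! Draw `m` uniformly. The spins are then independent and centred, with variance `n (n + 2) / 12`,
so `σ` has mean `0` and variance `N n (n + 2) / 12`. Since `cosh ≥ 1`, the left-hand side is at most
`∑ₘ σ(m)²`, the number of configurations times that variance; and since `exp x ≥ 1 + x` and `σ` has
mean `0`, the number of configurations is at most `∑ₘ exp (β σ(m))`. -/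

open Finset
open scoped BigOperators

section ProductAverage

variable {ι M : Type*} [Fintype ι] [DecidableEq ι] {α : ι → Type*} [∀ i, Fintype (α i)]

theorem expect_pi_eq_expect_expect [AddCommMonoid M] [Module ℚ≥0 M] (i : ι)
    (F : (∀ j, α j) → M) :
    𝔼 m, F m = 𝔼 a, 𝔼 r, F ((Equiv.piSplitAt i α).symm (a, r)) := by
  rw [← expect_product', univ_product_univ]
  exact Fintype.expect_equiv (Equiv.piSplitAt i α) _ _ fun m ↦
    congrArg F ((Equiv.piSplitAt i α).symm_apply_apply m).symm

variable [∀ i, Nonempty (α i)]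

theorem expect_pi_apply [AddCommMonoid M] [Module ℚ≥0 M] (i : ι) (f : α i → M) :
    𝔼 m : ∀ j, α j, f (m i) = 𝔼 a, f a := by
  simp [expect_pi_eq_expect_expect i]

theorem expect_pi_apply_mul_apply [Semiring M] [Module ℚ≥0 M] [IsScalarTower ℚ≥0 M M]
    [SMulCommClass ℚ≥0 M M] {i j : ι} (hij : i ≠ j) (f : α i → M) (g : α j → M) :
    𝔼 m : ∀ l, α l, f (m i) * g (m j) = (𝔼 a, f a) * 𝔼 b, g b := by
  rw [← expect_pi_apply (α := fun l : {l // l ≠ i} ↦ α l) ⟨j, hij.symm⟩ g,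
    expect_mul_expect, expect_pi_eq_expect_expect i]
  simp [hij.symm]

theorem expect_pi_sum_apply [AddCommMonoid M] [Module ℚ≥0 M] (f : ∀ i, α i → M) :
    𝔼 m : ∀ i, α i, ∑ i, f i (m i) = ∑ i, 𝔼 a, f i a := by
  simp only [expect_sum_comm, expect_pi_apply]

theorem expect_pi_sum_apply_sq_of_expect_eq_zero [Semiring M] [Module ℚ≥0 M] [IsScalarTower ℚ≥0 M M]
    [SMulCommClass ℚ≥0 M M] (f : ∀ i, α i → M) (hf : ∀ i, 𝔼 a, f i a = 0) :
    𝔼 m : ∀ i, α i, (∑ i, f i (m i)) ^ 2 = ∑ i, 𝔼 a, f i a ^ 2 := by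
  simp only [sq, sum_mul_sum, expect_sum_comm]
  refine sum_congr rfl fun i _ ↦ ?_
  calc ∑ j, 𝔼 m : ∀ l, α l, f i (m i) * f j (m j)
      = 𝔼 m : ∀ l, α l, f i (m i) * f i (m i) :=
        sum_eq_single_of_mem i (mem_univ i) fun j _ hji ↦ by
          rw [expect_pi_apply_mul_apply hji.symm, hf, zero_mul]
    _ = 𝔼 a, f i a * f i a := expect_pi_apply i fun a ↦ f i a * f i a

end ProductAverage

section CenteredObservable

variable {Ω : Type*} [Fintype Ω] (X : Ω → ℝ) (β : ℝ)

theorem card_le_sum_exp_mul_of_expect_eq_zero (hX : 𝔼 ω, X ω = 0) :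
    (Fintype.card Ω : ℝ) ≤ ∑ ω, Real.exp (β * X ω) := by
  have hsum : ∑ ω, X ω = 0 := by rw [← Fintype.card_mul_expect, hX, mul_zero]
  calc (Fintype.card Ω : ℝ) = ∑ ω, (β * X ω + 1) := by
        simp [sum_add_distrib, ← mul_sum, hsum]
    _ ≤ ∑ ω, Real.exp (β * X ω) := sum_le_sum fun ω _ ↦ Real.add_one_le_exp _

theorem sum_sq_div_cosh_le_sum_exp_mul_expect_sq (hX : 𝔼 ω, X ω = 0) :
    ∑ ω, X ω ^ 2 / Real.cosh (β * X ω) ≤ (∑ ω, Real.exp (β * X ω)) * 𝔼 ω, X ω ^ 2 :=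
  calc ∑ ω, X ω ^ 2 / Real.cosh (β * X ω)
      ≤ ∑ ω, X ω ^ 2 := sum_le_sum fun _ _ ↦ div_le_self (sq_nonneg _) (Real.one_le_cosh _)
    _ = Fintype.card Ω * 𝔼 ω, X ω ^ 2 := (Fintype.card_mul_expect _).symm
    _ ≤ (∑ ω, Real.exp (β * X ω)) * 𝔼 ω, X ω ^ 2 :=
        mul_le_mul_of_nonneg_right (card_le_sum_exp_mul_of_expect_eq_zero X β hX)
          (expect_nonneg fun _ _ ↦ sq_nonneg _)

end CenteredObservable

section Spin

variable {K : Type*} [Field K] [CharZero K]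

theorem sum_range_natCast_sub (c : K) (n : ℕ) :
    ∑ k ∈ range n, ((k : K) - c) = n * ((n - 1) / 2 - c) := by
  induction n with
  | zero => simp
  | succ n ih => rw [sum_range_succ, ih]; push_cast; ring

theorem sum_range_natCast_sub_sq (c : K) (n : ℕ) :
    ∑ k ∈ range n, ((k : K) - c) ^ 2 = n * ((n - 1) * (2 * n - 1) / 6 - c * (n - 1) + c ^ 2) := by
  induction n with
  | zero => simp
  | succ n ih => rw [sum_range_succ, ih]; push_cast; ring

theorem expect_fin_sub_half (n : ℕ) : 𝔼 k : Fin (n + 1), (((k : ℕ) : K) - n / 2) = 0 := by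
  rw [Fintype.expect_eq_sum_div_card,
    Fin.sum_univ_eq_sum_range fun k : ℕ ↦ (k : K) - n / 2, sum_range_natCast_sub]
  simp

theorem expect_fin_sub_half_sq (n : ℕ) :
    𝔼 k : Fin (n + 1), (((k : ℕ) : K) - n / 2) ^ 2 = (n : K) * (n + 2) / 12 := by
  rw [Fintype.expect_eq_sum_div_card,
    Fin.sum_univ_eq_sum_range fun k : ℕ ↦ ((k : K) - n / 2) ^ 2, sum_range_natCast_sub_sq,
    Fintype.card_fin, mul_div_cancel_left₀ _ (Nat.cast_ne_zero.mpr n.succ_ne_zero)]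
  push_cast
  ring

end Spin

theorem negative_term_bound_general {ι : Type*} [Fintype ι] [DecidableEq ι] {α : ι → Type*}
    [∀ i, Fintype (α i)] [∀ i, Nonempty (α i)] (X : ∀ i, α i → ℝ) (hX : ∀ i, 𝔼 a, X i a = 0)
    (β : ℝ) :
    ∑ m : ∀ i, α i, (∑ i, X i (m i)) ^ 2 / Real.cosh (β * ∑ i, X i (m i))
      ≤ (∑ m : ∀ i, α i, Real.exp (β * ∑ i, X i (m i))) * ∑ i, 𝔼 a, X i a ^ 2 := by
  have hmean : 𝔼 m : ∀ i, α i, ∑ i, X i (m i) = 0 := by simp [expect_pi_sum_apply, hX]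
  rw [← expect_pi_sum_apply_sq_of_expect_eq_zero X hX]
  exact sum_sq_div_cosh_le_sum_exp_mul_expect_sq _ β hmean

/-- The negative term of the quantum Fisher information `K_B` is at most of order `N`:
`∑_m σ(m)²/cosh(βσ(m)) ≤ (∑_m e^{βσ(m)}) · N n(n+2)/12`, the latter sum being `Z_β^N`. -/
theorem negative_term_bound (N n : ℕ) (hN : 1 ≤ N) (hn : 1 ≤ n) (β : ℝ) (hβ : 0 ≤ β) :
    ∑ m : Fin N → Fin (n + 1), (centeredSum m) ^ 2 / Real.cosh (β * centeredSum m)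
      ≤ (∑ m : Fin N → Fin (n + 1), Real.exp (β * centeredSum m))
          * N * n * ((n : ℝ) + 2) / 12 := by
  simpa [centeredSum, expect_fin_sub_half_sq, mul_assoc, mul_div_assoc] using
    negative_term_bound_general (fun (_ : Fin N) (k : Fin (n + 1)) ↦ ((k : ℕ) : ℝ) - n / 2)
      (fun _ ↦ expect_fin_sub_half n) β
end
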